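/- arXiv:2106.11206 — 2 statements merged into one kernel-verified Lean document; each statement's English description precedes it below -/
import Mathlib

section
/- For each η ∈ Ω there exists a unique subset J_η ⊆ Λ_{3,n} such that {A_nβ : β ∈ J_η} = T′_η. Moreover |J_η| = λ_{2,n} and det L^c_{J_η} ≠ 0, i.e. J_η ∈ S_{A_n}. -/
open Finset

/-- `Λ_{2,n}`: pairs `α ∈ ℕ²` with `1 ≤ α₁ + α₂ ≤ n`. -/
def Lam2 (n : ℕ) : Finset (ℕ × ℕ) :=
  ((range (n+1)) ×ˢ (range (n+1))).filter (fun α => 1 ≤ α.1 + α.2 ∧ α.1 + α.2 ≤ n)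

/-- `v̄ ∈ ℂ^{Λ_{2,n}}`, with `α`-coordinate `C(v₁,α₁)·C(v₂,α₂)`. -/
noncomputable def vbar (n : ℕ) (v : ℕ × ℕ) : (Lam2 n) → ℂ :=
  fun α => ((v.1.choose α.1.1 * v.2.choose α.1.2 : ℕ) : ℂ)

/-- `Λ_{3,n}`: triples `β ∈ ℕ³` with `1 ≤ β₁ + β₂ + β₃ ≤ n`. -/
def Lam3 (n : ℕ) : Finset (ℕ × ℕ × ℕ) :=
  ((range (n+1)) ×ˢ (range (n+1)) ×ˢ (range (n+1))).filter
    (fun β => 1 ≤ β.1 + β.2.1 + β.2.2 ∧ β.1 + β.2.1 + β.2.2 ≤ n)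

/-- The linear map `A_n : ℕ³ → ℕ²` with matrix rows `(1,1,n)` and `(0,1,n+1)`. -/
def Amap (n : ℕ) (β : ℕ × ℕ × ℕ) : ℕ × ℕ :=
  (β.1 + β.2.1 + n * β.2.2, β.2.1 + (n+1) * β.2.2)

/-- `c_β = Σ_{γ ≤ β} (−1)^{|β−γ|} C(β,γ) (A_nγ)‾`. -/
noncomputable def cvec (n : ℕ) (β : ℕ × ℕ × ℕ) : (Lam2 n) → ℂ :=
  ∑ γ ∈ (range (β.1+1)) ×ˢ (range (β.2.1+1)) ×ˢ (range (β.2.2+1)),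
    (((-1 : ℂ) ^ ((β.1 + β.2.1 + β.2.2) - (γ.1 + γ.2.1 + γ.2.2))) *
      ((β.1.choose γ.1 * β.2.1.choose γ.2.1 * β.2.2.choose γ.2.2 : ℕ) : ℂ)) •
      vbar n (Amap n γ)

/-- `J ∈ S_{A_n}`: `J ⊆ Λ_{3,n}`, `|J| = λ_{2,n}`, `det L^c_J ≠ 0`. -/
def memSA (n : ℕ) (J : Finset (ℕ × ℕ × ℕ)) : Prop :=
  J ⊆ Lam3 n ∧ J.card = (Lam2 n).card ∧
    ∀ e : (Lam2 n) ≃ J,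
      (Matrix.of fun i j : (Lam2 n) => cvec n (e i).1 j).det ≠ 0

/-- `m_J = Σ_{β ∈ J} A_nβ`. -/
def mJ (n : ℕ) (J : Finset (ℕ × ℕ × ℕ)) : ℕ × ℕ := ∑ β ∈ J, Amap n β

/-- `f_k(v) = k·v₁ + (1−k)·v₂`. -/
def fk (k : ℕ) (v : ℕ × ℕ) : ℤ := (k : ℤ) * v.1 + (1 - (k : ℤ)) * v.2

/-- Data of a sequence `η = (z, d₀, d₁, …, d_r)`. -/
structure OmegaData where
  r : ℕ
  z : Bool
  d : ℕ → ℕ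

/-- `η ∈ Ω`: `d₀ = 0`, `d_i ≥ 1` for `1 ≤ i ≤ r` (and `d_i = 0` beyond `r`),
and `d₀ + ⋯ + d_r = n`. -/
def OmegaData.IsOmega (n : ℕ) (η : OmegaData) : Prop :=
  η.d 0 = 0 ∧ (∀ i, 1 ≤ i → i ≤ η.r → 1 ≤ η.d i) ∧
  (∀ i, η.r < i → η.d i = 0) ∧
  (∑ i ∈ range (η.r + 1), η.d i) = n

/-- The unique `t` with `Σ_{i=0}^{t−1} d_i < j ≤ Σ_{i=0}^{t} d_i`. -/
noncomputable def tIdx (η : OmegaData) (j : ℕ) : ℕ :=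
  sInf {t | j ≤ ∑ i ∈ range (t+1), η.d i}

/-- The vector `v_{j,η} ∈ ℕ²`. -/
noncomputable def vvec (η : OmegaData) (j : ℕ) : ℕ × ℕ :=
  let t := tIdx η j
  let c := j - ∑ i ∈ range t, η.d i
  let a := (∑ i ∈ range t, if (Odd i ↔ Odd t) then η.d i else 0) + c
  if (η.z = true) ↔ Odd t then (a, 0) else (0, a)

/-- `T_{j,η}` for `1 ≤ j ≤ n`, and `T_{0,η} = {(1,1),…,(n,n)}`. -/
noncomputable def Tj (n : ℕ) (η : OmegaData) (j : ℕ) : Finset (ℕ × ℕ) :=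
  if j = 0 then (range n).image (fun q => (q+1, q+1))
  else (range (n - j + 1)).image (fun p => vvec η j + (p, p))

/-- `T_η = ⋃_{j=0}^{n} T_{j,η}`. -/
noncomputable def Tset (n : ℕ) (η : OmegaData) : Finset (ℕ × ℕ) :=
  (range (n+1)).biUnion (fun j => Tj n η j)

/-- `r_{i,η} = n·π₂(v_{i,η})`. -/
noncomputable def rshift (n : ℕ) (η : OmegaData) (i : ℕ) : ℕ := n * (vvec η i).2

/-- `T'_η = T_{0,η} ∪ ⋃_{i=1}^{n} (T_{i,η} + r_{i,η})`. -/
noncomputable def Tset' (n : ℕ) (η : OmegaData) : Finset (ℕ × ℕ) :=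
  Tj n η 0 ∪ (Finset.Icc 1 n).biUnion
    (fun i => (Tj n η i).image (fun v => v + (rshift n η i, rshift n η i)))

/-- `J_η`: the (unique) subset of `Λ_{3,n}` with `A_n(J_η) = T'_η`. -/
noncomputable def Jset (n : ℕ) (η : OmegaData) : Finset (ℕ × ℕ × ℕ) :=
  (Lam3 n).filter (fun β => Amap n β ∈ Tset' n η)

/-- `z_k = 1` iff `f_k((1,0)) ≤ f_k((n,n+1))`. -/
def zk (n k : ℕ) : Bool := decide (fk k (1, 0) ≤ fk k (n, n+1))

/-- `t_l` in the recursive definition of `η_k`, where `O`, `E` are the odd- and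
even-indexed partial sums `Σ_{j<l, j odd} d_{k,j}` and `Σ_{j<l, j even} d_{k,j}`. -/
noncomputable def tval (n k : ℕ) (l O E : ℕ) : ℕ :=
  let w := (if Odd l then E else O) + 1
  if ((zk n k = true) ↔ Odd l) then
    sSup {m : ℕ | (m : ℤ) * fk k (1, 0) ≤ fk k (w * n, w * (n+1))}
  else
    sSup {m : ℕ | (m : ℤ) * fk k (n, n+1) ≤ fk k (w, 0)}

/-- The pair `(Σ_{j≤l, j odd} d_{k,j}, Σ_{j≤l, j even} d_{k,j})` of the recursion
defining `η_k`. -/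
noncomputable def oeSums (n k : ℕ) : ℕ → ℕ × ℕ
  | 0 => (0, 0)
  | l + 1 =>
    let p := oeSums n k l
    let O := p.1
    let E := p.2
    let S := O + E
    let dnext := if S < n then
        min (n - S) (tval n k (l+1) O E - (if Odd (l+1) then O else E))
      else 0
    if Odd (l+1) then (O + dnext, E) else (O, E + dnext)

/-- `d_{k,l}`. -/
noncomputable def dk (n k : ℕ) : ℕ → ℕ
  | 0 => 0
  | l + 1 =>
    let p := oeSums n k l
    let O := p.1
    let E := p.2
    let S := O + E
    if S < n then
      min (n - S) (tval n k (l+1) O E - (if Odd (l+1) then O else E))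
    else 0

/-- `η_k = (z_k, d_{k,0}, …, d_{k,r})`, where `r` is the first index with
`Σ_{j=0}^{r} d_{k,j} = n`. -/
noncomputable def etak (n k : ℕ) : OmegaData :=
  { r := sInf {r | ∑ j ∈ range (r+1), dk n k j = n},
    z := zk n k,
    d := dk n k }

noncomputable def cfull (n : ℕ) (β : ℕ × ℕ × ℕ) (α : ℕ × ℕ) : ℂ :=
  ∑ γ ∈ (range (β.1+1)) ×ˢ (range (β.2.1+1)) ×ˢ (range (β.2.2+1)),
    (((-1 : ℂ) ^ ((β.1 + β.2.1 + β.2.2) - (γ.1 + γ.2.1 + γ.2.2))) *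
      ((β.1.choose γ.1 * β.2.1.choose γ.2.1 * β.2.2.choose γ.2.2 : ℕ) : ℂ)) *
      (((Amap n γ).1.choose α.1 * (Amap n γ).2.choose α.2 : ℕ) : ℂ)

theorem cvec_eq (n : ℕ) (β : ℕ × ℕ × ℕ) (α : Lam2 n) : cvec n β α = cfull n β α.1 := by
  simp only [cvec, cfull, Finset.sum_apply, Pi.smul_apply, vbar, smul_eq_mul]

theorem pow_expand {S : Type*} [CommRing S] [Algebra ℂ S] (x : S) (v N : ℕ) (h : v < N) :
    (1 + x) ^ v = ∑ k ∈ range N, ((v.choose k : ℕ) : ℂ) • x ^ k := by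
  rw [add_comm, add_pow]
  simp only [one_pow, mul_one]
  rw [← Finset.sum_subset (Finset.range_subset_range.2 (Nat.succ_le_of_lt h))]
  · refine Finset.sum_congr rfl fun k _ => ?_
    rw [Algebra.smul_def, map_natCast, mul_comm]
  · intro k _ hk
    rw [Nat.choose_eq_zero_of_lt (by simpa using hk)]
    simp

theorem sub_pow_expand {S : Type*} [CommRing S] [Algebra ℂ S] (u : S) (b : ℕ) :
    (u - 1) ^ b = ∑ k ∈ range (b+1), ((-1 : ℂ) ^ (b - k) * ((b.choose k : ℕ) : ℂ)) • u ^ k := by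
  rw [sub_eq_add_neg, add_pow]
  refine Finset.sum_congr rfl fun k _ => ?_
  rw [Algebra.smul_def]
  simp
  ring

theorem mon_expand {S : Type*} [CommRing S] [Algebra ℂ S] (x y : S) (n : ℕ) (β : ℕ × ℕ × ℕ)
    (N : ℕ) (hN : (n+1) * (β.1 + β.2.1 + β.2.2) < N) :
    x ^ β.1 * ((1 + x) * (1 + y) - 1) ^ β.2.1 * ((1 + x)^n * (1+y)^(n+1) - 1) ^ β.2.2
      = ∑ α ∈ range N ×ˢ range N, cfull n β α • (x ^ α.1 * y ^ α.2) := by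
  obtain ⟨a, b, c⟩ := β
  simp only at hN ⊢
  have hx : x ^ a = ((1 + x) - 1) ^ a := by congr 1; ring
  rw [hx, sub_pow_expand, sub_pow_expand, sub_pow_expand]
  simp only [cfull, Finset.sum_smul]
  rw [Finset.sum_comm (s := range N ×ˢ range N)]
  rw [mul_assoc, Finset.sum_mul_sum (range (b+1)), ← Finset.sum_product', Finset.sum_mul_sum,
    ← Finset.sum_product']
  refine Finset.sum_congr rfl fun γ hγ => ?_
  obtain ⟨a', b', c'⟩ := γ
  simp only [Finset.mem_product, Finset.mem_range] at hγ
  obtain ⟨h1, h2, h3⟩ := hγ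
  have hs : a + b + c - (a' + b' + c') = (a - a') + (b - b') + (c - c') := by omega
  simp only [mul_smul (_ * _ : ℂ), ← Finset.smul_sum]
  have e1 : ∑ α ∈ range N ×ˢ range N, (((Amap n (a',b',c')).1.choose α.1 * (Amap n (a',b',c')).2.choose α.2 : ℕ) : ℂ) • (x ^ α.1 * y ^ α.2)
      = (1 + x) ^ (Amap n (a',b',c')).1 * (1+y) ^ (Amap n (a',b',c')).2 := by
    rw [pow_expand x _ N, pow_expand y _ N, Finset.sum_mul_sum, ← Finset.sum_product']
    · refine Finset.sum_congr rfl fun α _ => ?_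
      simp only [Algebra.smul_def]
      simp
      ring
    · refine lt_of_le_of_lt ?_ hN
      simp only [Amap]
      nlinarith [Nat.zero_le n]
    · refine lt_of_le_of_lt ?_ hN
      simp only [Amap]
      have : n * c' ≤ n * c := Nat.mul_le_mul_left _ (by omega)
      have : 0 ≤ n * a := Nat.zero_le _
      have : 0 ≤ n * b := Nat.zero_le _
      nlinarith
  rw [e1, hs]
  simp only [Algebra.smul_def, Amap, mul_pow, ← pow_mul, pow_add]
  simp
  ring

open Polynomial in
theorem poly_indep (v P : ℕ → ℕ × ℕ) (n : ℕ) (hv0 : v 0 = (0,0)) (hP0 : P 0 = (0,0))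
    (hstep : ∀ i < n, (P (i+1) = ((P i).1 + 1, (P i).2) ∧ v (i+1) = ((P i).1 + 1, 0)) ∨
      (P (i+1) = ((P i).1, (P i).2 + 1) ∧ v (i+1) = (0, (P i).2 + 1))) :
    ∀ m ≤ n, (P m).1 + (P m).2 = m ∧ (∀ i ≤ m, (v i).1 ≤ (P m).1 ∧ (v i).2 ≤ (P m).2) ∧
      (∀ i < m, v i ≠ v m) ∧
      ∀ g : ℕ → ℂ, (∑ i ∈ range (m+1), C (g i) * (X ^ (v i).1 * (-X) ^ (v i).2 *
        (1 + X) ^ ((P m).2 - (v i).2)) : ℂ[X]) = 0 → ∀ i ≤ m, g i = 0 := by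
  intro m
  induction m with
  | zero =>
    intro _
    refine ⟨by simp [hP0], ?_, by simp, ?_⟩
    · intro i hi
      obtain rfl : i = 0 := by omega
      simp [hv0]
    · intro g hg i hi
      obtain rfl : i = 0 := by omega
      simpa [hv0, hP0] using hg
  | succ m ih =>
    intro hm
    obtain ⟨hs, hle, hne, hind⟩ := ih (by omega)
    rcases hstep m (by omega) with ⟨hP, hv⟩ | ⟨hP, hv⟩
    · refine ⟨by simp [hP]; omega, ?_, ?_, ?_⟩
      · intro i hi
        rcases Nat.lt_or_ge i (m+1) with h | h
        · have := hle i (by omega)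
          simp [hP]; omega
        · obtain rfl : i = m+1 := by omega
          simp [hP, hv]
      · intro i hi h
        have := hle i (by omega)
        rw [h, hv] at this
        simp at this
      · intro g hg
        rw [Finset.sum_range_succ] at hg
        have hlast : g (m+1) = 0 := by
          have := congrArg (fun p => p.coeff (m+1)) hg
          simp only [coeff_add, finsetSum_coeff, coeff_zero, coeff_C_mul] at this
          rw [Finset.sum_eq_zero] at this
          · rw [hv, hP] at this
            simp only [pow_zero, mul_one, tsub_zero, zero_add] at this
            have e : m + 1 = (P m).2 + ((P m).1 + 1) := by omega
            rw [e, coeff_X_pow_mul, coeff_one_add_X_pow] at this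
            rw [e]
            simpa using this
          · intro i hi
            rw [coeff_eq_zero_of_natDegree_lt, mul_zero]
            have h1 := hle i (by simp at hi; omega)
            rw [hP]
            have h2 : (X ^ (v i).1 * (-X) ^ (v i).2 * (1 + X) ^ ((P m).2 - (v i).2) : ℂ[X]).natDegree
              ≤ (v i).1 + (v i).2 + ((P m).2 - (v i).2) := by
              compute_degree
            simp only
            omega
        rw [hlast] at hg
        have := hind g (by simpa [hP] using hg)
        intro i hi
        rcases Nat.lt_or_ge i (m+1) with h | h
        · exact this i (by omega)
        · obtain rfl : i = m+1 := by omega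
          exact hlast
    · refine ⟨by simp [hP]; omega, ?_, ?_, ?_⟩
      · intro i hi
        rcases Nat.lt_or_ge i (m+1) with h | h
        · have := hle i (by omega)
          simp [hP]; omega
        · obtain rfl : i = m+1 := by omega
          simp [hP, hv]
      · intro i hi h
        have := hle i (by omega)
        rw [h, hv] at this
        simp at this
      · intro g hg
        rw [Finset.sum_range_succ] at hg
        have hfac : (∑ i ∈ range (m+1), C (g i) * (X ^ (v i).1 * (-X) ^ (v i).2 *
            (1 + X) ^ ((P (m+1)).2 - (v i).2)) : ℂ[X]) =
            (1 + X) * (∑ i ∈ range (m+1), C (g i) * (X ^ (v i).1 * (-X) ^ (v i).2 *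
            (1 + X) ^ ((P m).2 - (v i).2)) : ℂ[X]) := by
          rw [Finset.mul_sum]
          refine Finset.sum_congr rfl fun i hi => ?_
          have h1 := hle i (by simp at hi; omega)
          rw [hP]
          simp only
          rw [Nat.sub_add_comm h1.2, pow_succ]
          ring
        rw [hfac] at hg
        have hlast : g (m+1) = 0 := by
          have := congrArg (fun p => p.eval (-1)) hg
          simpa [hv, hP] using this
        rw [hlast] at hg
        have hne : (1 + X : ℂ[X]) ≠ 0 := by
          rw [add_comm]; exact X_add_C_ne_zero (1:ℂ)
        have := hind g (by simpa [hne] using hg)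
        intro i hi
        rcases Nat.lt_or_ge i (m+1) with h | h
        · exact this i (by omega)
        · obtain rfl : i = m+1 := by omega
          exact hlast

open Polynomial in
theorem ser_indep (v P : ℕ → ℕ × ℕ) (n : ℕ) (hv0 : v 0 = (0,0)) (hP0 : P 0 = (0,0))
    (hstep : ∀ i < n, (P (i+1) = ((P i).1 + 1, (P i).2) ∧ v (i+1) = ((P i).1 + 1, 0)) ∨
      (P (i+1) = ((P i).1, (P i).2 + 1) ∧ v (i+1) = (0, (P i).2 + 1)))
    (s : PowerSeries ℂ) (hs : (1 + PowerSeries.X) * s = 1)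
    (m : ℕ) (hm : m ≤ n) (g : ℕ → ℂ)
    (hg : (PowerSeries.X : PowerSeries ℂ) ^ (m+1) ∣ ∑ i ∈ range (m+1),
      PowerSeries.C (g i) * (PowerSeries.X ^ (v i).1 * (-PowerSeries.X * s) ^ (v i).2)) :
    ∀ i ≤ m, g i = 0 := by
  obtain ⟨hsum, hle, -, hind⟩ := poly_indep v P n hv0 hP0 hstep m hm
  apply hind
  set q := (∑ i ∈ range (m+1), C (g i) * (X ^ (v i).1 * (-X) ^ (v i).2 *
        (1 + X) ^ ((P m).2 - (v i).2)) : ℂ[X]) with hq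
  have h1 : (q : PowerSeries ℂ) = (1 + PowerSeries.X) ^ (P m).2 * ∑ i ∈ range (m+1),
      PowerSeries.C (g i) * (PowerSeries.X ^ (v i).1 * (-PowerSeries.X * s) ^ (v i).2) := by
    rw [hq, Finset.mul_sum, ← Polynomial.coeToPowerSeries.ringHom_apply, map_sum]
    refine Finset.sum_congr rfl fun i hi => ?_
    have h2 := (hle i (by simp at hi; omega)).2
    simp only [map_mul, map_pow, map_add, map_neg, map_one,
      Polynomial.coeToPowerSeries.ringHom_apply, coe_C, coe_X]
    obtain ⟨k, hk⟩ := Nat.exists_eq_add_of_le h2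
    rw [hk, Nat.add_sub_cancel_left, pow_add, mul_pow (-PowerSeries.X) s]
    have : (1 + PowerSeries.X) ^ (v i).2 * s ^ (v i).2 = 1 := by rw [← mul_pow, hs, one_pow]
    linear_combination (- PowerSeries.C (g i) * PowerSeries.X ^ (v i).1 * (-PowerSeries.X) ^ (v i).2 * (1 + PowerSeries.X) ^ k) * this
  have h3 : (PowerSeries.X : PowerSeries ℂ) ^ (m+1) ∣ (q : PowerSeries ℂ) := by
    rw [h1]; exact hg.mul_left _
  rw [PowerSeries.X_pow_dvd_iff] at h3
  ext k
  rcases Nat.lt_or_ge k (m+1) with h | h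
  · simpa using h3 k h
  · rw [coeff_eq_zero_of_natDegree_lt, coeff_zero]
    refine lt_of_le_of_lt ?_ h
    rw [hq]
    refine natDegree_sum_le_of_forall_le _ _ fun i hi => ?_
    have h1 := hle i (by simp at hi; omega)
    have h2 : (C (g i) * (X ^ (v i).1 * (-X) ^ (v i).2 * (1 + X) ^ ((P m).2 - (v i).2)) : ℂ[X]).natDegree
              ≤ (v i).1 + (v i).2 + ((P m).2 - (v i).2) := by
      compute_degree
    omega

theorem mem_Lam2 (n : ℕ) (α : ℕ × ℕ) : α ∈ Lam2 n ↔ 1 ≤ α.1 + α.2 ∧ α.1 + α.2 ≤ n := by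
  simp only [Lam2, mem_filter, mem_product, mem_range]
  omega

theorem mem_Lam3 (n : ℕ) (β : ℕ × ℕ × ℕ) :
    β ∈ Lam3 n ↔ 1 ≤ β.1 + β.2.1 + β.2.2 ∧ β.1 + β.2.1 + β.2.2 ≤ n := by
  simp only [Lam3, mem_filter, mem_product, mem_range]
  omega

open Polynomial in
theorem main_indep (v P : ℕ → ℕ × ℕ) (n : ℕ) (hv0 : v 0 = (0,0)) (hP0 : P 0 = (0,0))
    (hstep : ∀ i < n, (P (i+1) = ((P i).1 + 1, (P i).2) ∧ v (i+1) = ((P i).1 + 1, 0)) ∨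
      (P (i+1) = ((P i).1, (P i).2 + 1) ∧ v (i+1) = (0, (P i).2 + 1)))
    (G : ℕ × ℕ → ℂ)
    (hG : ∀ α ∈ Lam2 n, ∑ ι ∈ Lam2 n, G ι * cfull n ((v ι.1).1, ι.2, (v ι.1).2) α = 0) :
    ∀ ι ∈ Lam2 n, G ι = 0 := by
  have hpi := poly_indep v P n hv0 hP0 hstep
  obtain ⟨s, hs⟩ : ∃ s : PowerSeries ℂ, (1 + PowerSeries.X) * s = 1 :=
    ⟨(1 + PowerSeries.X)⁻¹, PowerSeries.mul_inv_cancel _ (by simp)⟩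
  set x : (PowerSeries ℂ)[X] := C PowerSeries.X with hx
  set y : (PowerSeries ℂ)[X] := (X + C (-PowerSeries.X)) * C s with hy
  have hs' : (1 + x) * C s = 1 := by
    rw [hx, ← C_1, ← C_add, ← C_mul, hs]
  have h1y : 1 + y = (1 + X) * C s := by
    rw [hy, C_neg, ← hx]; linear_combination -hs'
  have hW : (1 + x) * (1 + y) - 1 = X := by
    rw [h1y]; linear_combination (1 + X) * hs'
  set Z : (PowerSeries ℂ)[X] := (1 + x)^n * (1+y)^(n+1) - 1 with hZ
  have hZ0 : Z.eval 0 = -PowerSeries.X * s := by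
    rw [hZ, h1y, hx]
    simp only [eval_sub, eval_mul, eval_pow, eval_add, eval_one, eval_C, eval_X, add_zero, one_mul]
    rw [pow_succ, ← mul_assoc, ← mul_pow, hs, one_pow]
    linear_combination hs
  set N := (n+1) * n + 1 with hN
  set mon : ℕ × ℕ → (PowerSeries ℂ)[X] := fun ι => x ^ (v ι.1).1 * X ^ ι.2 * Z ^ (v ι.1).2 with hmon
  set K : ℕ × ℕ → ℂ := fun α => ∑ ι ∈ Lam2 n, G ι * cfull n ((v ι.1).1, ι.2, (v ι.1).2) α with hK
  have hexp : ∑ ι ∈ Lam2 n, G ι • mon ι = ∑ α ∈ range N ×ˢ range N, K α • (x ^ α.1 * y ^ α.2) := by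
    simp only [hK, Finset.sum_smul]
    rw [Finset.sum_comm]
    refine Finset.sum_congr rfl fun ι hι => ?_
    rw [mem_Lam2] at hι
    have := mon_expand x y n ((v ι.1).1, ι.2, (v ι.1).2) N (by
      obtain ⟨h1, h2, -⟩ := hpi ι.1 (by omega)
      have h3 := h2 ι.1 le_rfl
      rw [hN, Nat.lt_succ_iff]
      apply Nat.mul_le_mul_left
      simp only
      omega)
    simp only [hW, ← hZ] at this
    simp only [hmon, this, Finset.smul_sum, mul_smul]
  have hdvd : ∀ p, (PowerSeries.X : PowerSeries ℂ) ^ (n + 1 - p) ∣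
      (∑ ι ∈ Lam2 n, G ι • mon ι + (- K (0,0)) • 1).coeff p := by
    intro p
    have h0 : ((0,0) : ℕ × ℕ) ∈ range N ×ˢ range N := by simp [hN]
    rw [hexp, ← Finset.add_sum_erase _ _ h0]
    have : ∀ A B : (PowerSeries ℂ)[X], K (0,0) • (x ^ 0 * y ^ 0) + A + (-K (0,0)) • 1 = A := by
      intro A B
      simp
    rw [this _ 0, finsetSum_coeff]
    refine Finset.dvd_sum fun α hα => ?_
    rw [coeff_smul]
    by_cases hL : α ∈ Lam2 n
    · have : K α = 0 := hG α hL
      rw [this]; simp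
    · have hα0 : α ≠ (0,0) := (Finset.mem_erase.1 hα).1
      have hbig : n + 1 ≤ α.1 + α.2 := by
        rw [mem_Lam2] at hL
        have : α.1 + α.2 ≠ 0 := fun h => hα0 (by ext <;> simp <;> omega)
        omega
      rw [PowerSeries.smul_eq_C_mul]
      apply Dvd.dvd.mul_left
      rw [hy, hx, mul_pow, ← C_pow, ← C_pow, coeff_C_mul, coeff_mul_C, coeff_X_add_C_pow]
      rcases Nat.lt_or_ge α.2 p with h | h
      · rw [Nat.choose_eq_zero_of_lt h]; simp
      · have : (PowerSeries.X : PowerSeries ℂ) ^ (n + 1 - p) ∣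
            PowerSeries.X ^ α.1 * (-PowerSeries.X) ^ (α.2 - p) := by
          rw [neg_pow, mul_left_comm, ← pow_add]
          exact (pow_dvd_pow _ (by omega)).mul_left _
        obtain ⟨r, hr⟩ := this
        refine ⟨r * (α.2.choose p : PowerSeries ℂ) * s ^ α.2, ?_⟩
        linear_combination ((α.2.choose p : PowerSeries ℂ) * s ^ α.2) * hr
  set G' : ℕ × ℕ → ℂ := fun ι => if ι = (0,0) then - K (0,0) else G ι with hG'
  have h0L : ((0,0) : ℕ × ℕ) ∉ Lam2 n := by simp [mem_Lam2]
  have hins : ∑ ι ∈ insert (0,0) (Lam2 n), G' ι • mon ι =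
      ∑ ι ∈ Lam2 n, G ι • mon ι + (- K (0,0)) • 1 := by
    rw [Finset.sum_insert h0L, add_comm]
    congr 1
    · refine Finset.sum_congr rfl fun ι hι => ?_
      have : ι ≠ (0,0) := fun h => h0L (h ▸ hι)
      simp [hG', this]
    · simp [hG', hmon, hv0]
  rw [← hins] at hdvd
  have memL : ∀ ι, ι ∈ insert (0,0) (Lam2 n) ↔ ι.1 + ι.2 ≤ n := by
    intro ι
    rw [Finset.mem_insert, mem_Lam2, Prod.ext_iff]
    simp only
    omega
  have hall : ∀ p, ∀ i, i + p ≤ n → G' (i, p) = 0 := by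
    intro p
    induction p using Nat.strong_induction_on with
    | _ p ih =>
      intro i hi
      have h1 := hdvd p
      rw [finsetSum_coeff] at h1
      have h2 : ∀ ι ∈ insert (0,0) (Lam2 n), (G' ι • mon ι).coeff p =
          if ι.2 = p then PowerSeries.C (G' ι) * (PowerSeries.X ^ (v ι.1).1 *
            (-PowerSeries.X * s) ^ (v ι.1).2) else 0 := by
        intro ι hι
        rw [memL] at hι
        have hm : mon ι = X ^ ι.2 * (x ^ (v ι.1).1 * Z ^ (v ι.1).2) := by
          simp only [hmon]; ring
        rw [coeff_smul, PowerSeries.smul_eq_C_mul, hm, coeff_X_pow_mul']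
        split_ifs with h3 h4 h4
        · rw [h4, Nat.sub_self, coeff_zero_eq_eval_zero, eval_mul, eval_pow, eval_pow, hZ0, hx, eval_C]
        · have := ih ι.2 (by omega) ι.1 hι
          rw [Prod.mk.eta] at this
          rw [this]; simp
        · omega
        · simp
      rw [Finset.sum_congr rfl h2, ← Finset.sum_filter] at h1
      have h3 : (insert (0,0) (Lam2 n)).filter (fun ι => ι.2 = p) =
          (range (n - p + 1)).image (fun i => (i, p)) := by
        ext ⟨a, b⟩
        rw [Finset.mem_filter, memL]
        simp only [mem_image, mem_range, Prod.mk.injEq]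
        constructor
        · rintro ⟨h, rfl⟩
          exact ⟨a, by omega, rfl, rfl⟩
        · rintro ⟨a', h, rfl, rfl⟩
          exact ⟨by omega, rfl⟩
      rw [h3, Finset.sum_image (by intro a _ b _ h; simpa using h)] at h1
      have e : n + 1 - p = n - p + 1 := by omega
      rw [e] at h1
      exact ser_indep v P n hv0 hP0 hstep s hs (n - p) (by omega) (fun i => G' (i, p)) h1 i (by omega)
  intro ι hι
  have h1 : ι ≠ (0,0) := fun h => h0L (h ▸ hι)
  have h2 := hall ι.2 ι.1 (by rw [mem_Lam2] at hι; omega)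
  simpa [hG', h1] using h2

noncomputable def sameS (η : OmegaData) (i : ℕ) : ℕ :=
  (∑ l ∈ range (tIdx η i), if (Odd l ↔ Odd (tIdx η i)) then η.d l else 0) +
    (i - ∑ l ∈ range (tIdx η i), η.d l)

noncomputable def oppS (η : OmegaData) (i : ℕ) : ℕ :=
  ∑ l ∈ range (tIdx η i), if (Odd l ↔ Odd (tIdx η i)) then 0 else η.d l

open Classical in
noncomputable def Pfun (η : OmegaData) (i : ℕ) : ℕ × ℕ :=
  if (η.z = true) ↔ Odd (tIdx η i) then (sameS η i, oppS η i) else (oppS η i, sameS η i)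

theorem vvec_eq (η : OmegaData) (i : ℕ) :
    vvec η i = if (η.z = true) ↔ Odd (tIdx η i) then (sameS η i, 0) else (0, sameS η i) := rfl

theorem tIdx_eq (η : OmegaData) (j t : ℕ) (h1 : j ≤ ∑ i ∈ range (t+1), η.d i)
    (h2 : ∑ i ∈ range t, η.d i < j ∨ t = 0) : tIdx η j = t := by
  apply le_antisymm
  · exact Nat.sInf_le h1
  · have hm : tIdx η j ∈ {t | j ≤ ∑ i ∈ range (t+1), η.d i} := Nat.sInf_mem ⟨t, h1⟩
    simp only [Set.mem_ofPred_eq] at hm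
    by_contra h
    have : ∑ i ∈ range (tIdx η j + 1), η.d i ≤ ∑ i ∈ range t, η.d i :=
      Finset.sum_le_sum_of_subset (Finset.range_subset_range.2 (by omega))
    omega

theorem tIdx_zero (η : OmegaData) : tIdx η 0 = 0 := tIdx_eq η 0 0 (Nat.zero_le _) (Or.inr rfl)

theorem tIdx_le (n : ℕ) (η : OmegaData) (hη : η.IsOmega n) (i : ℕ) (hi : i ≤ n) :
    i ≤ ∑ l ∈ range (tIdx η i + 1), η.d l := by
  have hm : tIdx η i ∈ {t | i ≤ ∑ l ∈ range (t+1), η.d l} :=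
    Nat.sInf_mem ⟨η.r, by simp only [Set.mem_ofPred_eq]; rw [hη.2.2.2]; exact hi⟩
  exact hm

theorem tIdx_lt (η : OmegaData) (i : ℕ) (h0 : tIdx η i ≠ 0) :
    ∑ l ∈ range (tIdx η i), η.d l < i := by
  by_contra h
  push Not at h
  obtain ⟨t, ht⟩ := Nat.exists_eq_succ_of_ne_zero h0
  rw [ht] at h
  have : tIdx η i ≤ t := Nat.sInf_le h
  omega

theorem step_aux (n : ℕ) (η : OmegaData) (hη : η.IsOmega n) (i : ℕ) (hi : i < n) :
    (tIdx η (i+1) = tIdx η i ∧ sameS η (i+1) = sameS η i + 1 ∧ oppS η (i+1) = oppS η i) ∨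
    (tIdx η (i+1) = tIdx η i + 1 ∧ sameS η (i+1) = oppS η i + 1 ∧ oppS η (i+1) = sameS η i) := by
  have h1 := tIdx_le n η hη i hi.le
  have h2 : ∑ l ∈ range (tIdx η i), η.d l ≤ i := by
    by_cases h : tIdx η i = 0
    · rw [h]; simp
    · exact (tIdx_lt η i h).le
  by_cases hc : i + 1 ≤ ∑ l ∈ range (tIdx η i + 1), η.d l
  · left
    have ht : tIdx η (i+1) = tIdx η i := tIdx_eq η _ _ hc (Or.inl (by omega))
    refine ⟨ht, ?_, ?_⟩
    · simp only [sameS, ht]; omega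
    · simp only [oppS, ht]
  · right
    have he : ∑ l ∈ range (tIdx η i + 1), η.d l = i := by omega
    have hr : tIdx η i + 1 ≤ η.r := by
      by_contra h
      have : ∑ l ∈ range (η.r + 1), η.d l ≤ ∑ l ∈ range (tIdx η i + 1), η.d l :=
        Finset.sum_le_sum_of_subset (Finset.range_subset_range.2 (by omega))
      rw [hη.2.2.2] at this
      omega
    have hd := hη.2.1 (tIdx η i + 1) (by omega) hr
    have ht : tIdx η (i+1) = tIdx η i + 1 := by
      refine tIdx_eq η _ _ ?_ (Or.inl (by omega))
      rw [Finset.sum_range_succ]; omega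
    refine ⟨ht, ?_, ?_⟩
    · simp only [sameS, oppS, ht, he]
      rw [Finset.sum_range_succ, Nat.add_sub_cancel_left, if_neg, add_zero]
      · congr 1
        refine Finset.sum_congr rfl fun l _ => ?_
        simp only [Nat.odd_add_one]
        by_cases a : Odd l <;> by_cases b : Odd (tIdx η i) <;> simp [a, b]
      · simp only [Nat.odd_add_one]; tauto
    · simp only [sameS, oppS, ht]
      rw [Finset.sum_range_succ] at he ⊢
      rw [if_neg (by simp only [Nat.odd_add_one]; tauto)]
      congr 1
      · refine Finset.sum_congr rfl fun l _ => ?_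
        simp only [Nat.odd_add_one]
        by_cases a : Odd l <;> by_cases b : Odd (tIdx η i) <;> simp [a, b]
      · omega

theorem step_all (n : ℕ) (η : OmegaData) (hη : η.IsOmega n) (i : ℕ) (hi : i < n) :
    (Pfun η (i+1) = ((Pfun η i).1 + 1, (Pfun η i).2) ∧ vvec η (i+1) = ((Pfun η i).1 + 1, 0)) ∨
      (Pfun η (i+1) = ((Pfun η i).1, (Pfun η i).2 + 1) ∧ vvec η (i+1) = (0, (Pfun η i).2 + 1)) := by
  rcases step_aux n η hη i hi with ⟨h1, h2, h3⟩ | ⟨h1, h2, h3⟩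
  · simp only [Pfun, vvec_eq, h1, h2, h3]
    split_ifs <;> simp
  · simp only [Pfun, vvec_eq, h1, h2, h3, Nat.odd_add_one]
    by_cases a : η.z = true <;> by_cases b : Odd (tIdx η i) <;> simp [a, b]

theorem vvec_zero (η : OmegaData) : vvec η 0 = (0,0) := by
  rw [vvec_eq]; simp [sameS, tIdx_zero]

theorem Pfun_zero (η : OmegaData) : Pfun η 0 = (0,0) := by
  simp [Pfun, sameS, oppS, tIdx_zero]

noncomputable def Phi (η : OmegaData) (ι : ℕ × ℕ) : ℕ × ℕ × ℕ :=
  ((vvec η ι.1).1, ι.2, (vvec η ι.1).2)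

theorem Amap_injOn (n : ℕ) : Set.InjOn (Amap n) (Lam3 n : Set (ℕ × ℕ × ℕ)) := by
  rintro ⟨a, b, c⟩ h ⟨a', b', c'⟩ h' e
  rw [Finset.mem_coe, mem_Lam3] at h h'
  simp only [Amap, Prod.mk.injEq] at e h h' ⊢
  obtain ⟨e1, e2⟩ := e
  have hc : c = c' := by
    rcases lt_trichotomy c c' with hlt | heq | hlt
    · obtain ⟨k, rfl⟩ := Nat.exists_eq_add_of_lt hlt
      nlinarith [Nat.zero_le (n * k)]
    · exact heq
    · obtain ⟨k, rfl⟩ := Nat.exists_eq_add_of_lt hlt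
      nlinarith [Nat.zero_le (n * k)]
  subst hc
  omega

theorem image_Phi (n : ℕ) (η : OmegaData) :
    ((Lam2 n).image (Phi η)).image (Amap n) = Tset' n η := by
  ext w
  simp only [Finset.mem_image, Tset', Finset.mem_union, Finset.mem_biUnion, Tj, rshift,
    Finset.mem_Icc, exists_exists_and_eq_and]
  constructor
  · rintro ⟨⟨i, p⟩, hι, rfl⟩
    rw [mem_Lam2] at hι
    simp only at hι
    by_cases h0 : i = 0
    · left
      subst h0
      simp only [if_true, Finset.mem_image, mem_range]
      refine ⟨p - 1, by omega, ?_⟩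
      simp only [Phi, vvec_zero, Amap, Prod.mk.injEq]
      omega
    · right
      refine ⟨i, by omega, ?_⟩
      rw [if_neg h0]
      refine ⟨vvec η i + (p, p), Finset.mem_image.2 ⟨p, by simp; omega, rfl⟩, ?_⟩
      simp only [Phi, Amap, Prod.ext_iff, Prod.fst_add, Prod.snd_add]
      exact ⟨trivial, by ring⟩
  · rintro (h | ⟨i, hi, h⟩)
    · simp only [if_true, Finset.mem_image, mem_range] at h
      obtain ⟨q, hq, rfl⟩ := h
      refine ⟨(0, q+1), by rw [mem_Lam2]; simp only; omega, ?_⟩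
      simp [Phi, vvec_zero, Amap]
    · rw [if_neg (by omega)] at h
      obtain ⟨u, hu, rfl⟩ := h
      obtain ⟨p, hp, rfl⟩ := Finset.mem_image.1 hu
      rw [mem_range] at hp
      refine ⟨(i, p), by rw [mem_Lam2]; simp only; omega, ?_⟩
      simp only [Phi, Amap, Prod.ext_iff, Prod.fst_add, Prod.snd_add]
      exact ⟨trivial, by ring⟩

theorem uniq_J (n : ℕ) (J J' : Finset (ℕ × ℕ × ℕ)) (h : J ⊆ Lam3 n) (h' : J' ⊆ Lam3 n)
    (e : J.image (Amap n) = J'.image (Amap n)) : J = J' := by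
  have key : ∀ J J' : Finset (ℕ × ℕ × ℕ), J ⊆ Lam3 n → J' ⊆ Lam3 n →
      J.image (Amap n) = J'.image (Amap n) → J ⊆ J' := by
    intro J J' h h' e β hβ
    have h1 : Amap n β ∈ J'.image (Amap n) := e ▸ Finset.mem_image_of_mem _ hβ
    obtain ⟨β', hb, he⟩ := Finset.mem_image.1 h1
    rwa [← Amap_injOn n (h' hb) (h hβ) he]
  exact Finset.Subset.antisymm (key J J' h h' e) (key J' J h' h e.symm)

theorem stmt3 (n : ℕ) (hn : 1 ≤ n) (η : OmegaData) (hη : η.IsOmega n) :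
    (∃! J : Finset (ℕ × ℕ × ℕ), J ⊆ Lam3 n ∧ J.image (Amap n) = Tset' n η) ∧
    (∀ J : Finset (ℕ × ℕ × ℕ), J ⊆ Lam3 n → J.image (Amap n) = Tset' n η →
      J.card = (Lam2 n).card ∧ memSA n J) := by
  have hpi := poly_indep (vvec η) (Pfun η) n (vvec_zero η) (Pfun_zero η) (step_all n η hη)
  have hsub : (Lam2 n).image (Phi η) ⊆ Lam3 n := by
    intro β hβ
    obtain ⟨⟨i, p⟩, hι, rfl⟩ := Finset.mem_image.1 hβ
    rw [mem_Lam2] at hι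
    rw [mem_Lam3]
    simp only [Phi] at hι ⊢
    obtain ⟨h1, h2, h3, -⟩ := hpi i (by omega)
    have h4 := h2 i le_rfl
    refine ⟨?_, by omega⟩
    by_contra h
    rcases Nat.eq_zero_or_pos i with rfl | hpos
    · omega
    · apply h3 0 hpos
      rw [vvec_zero]
      ext <;> simp <;> omega
  have hinj : Set.InjOn (Phi η) (Lam2 n : Set (ℕ × ℕ)) := by
    rintro ⟨i, p⟩ h ⟨i', p'⟩ h' e
    rw [Finset.mem_coe, mem_Lam2] at h h'
    simp only [Phi, Prod.mk.injEq] at e h h' ⊢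
    obtain ⟨e1, rfl, e2⟩ := e
    have ev : vvec η i = vvec η i' := Prod.ext e1 e2
    refine ⟨?_, rfl⟩
    rcases lt_trichotomy i i' with hlt | heq | hlt
    · exact absurd ev ((hpi i' (by omega)).2.2.1 i hlt)
    · exact heq
    · exact absurd ev.symm ((hpi i (by omega)).2.2.1 i' hlt)
  refine ⟨⟨(Lam2 n).image (Phi η), ⟨hsub, image_Phi n η⟩, ?_⟩, ?_⟩
  · rintro J ⟨hJ, hJ'⟩
    exact uniq_J n _ _ hJ hsub (hJ'.trans (image_Phi n η).symm)
  · intro J hJ hJ'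
    have hJe := uniq_J n _ _ hJ hsub (hJ'.trans (image_Phi n η).symm)
    have hcard : J.card = (Lam2 n).card := by rw [hJe, Finset.card_image_of_injOn hinj]
    refine ⟨hcard, hJ, hcard, ?_⟩
    intro e hdet
    obtain ⟨h, hne, hz⟩ := Matrix.exists_vecMul_eq_zero_iff.2 hdet
    apply hne
    classical
    set H : ℕ × ℕ × ℕ → ℂ := fun β => if hβ : β ∈ J then h (e.symm ⟨β, hβ⟩) else 0 with hH
    have hHe : ∀ i, H (e i).1 = h i := by
      intro i; simp [hH]
    have hzero := main_indep (vvec η) (Pfun η) n (vvec_zero η) (Pfun_zero η) (step_all n η hη)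
      (fun ι => H (Phi η ι)) (by
        intro α hα
        have h1 := congrFun hz ⟨α, hα⟩
        simp only [Matrix.vecMul, dotProduct, Matrix.of_apply, Pi.zero_apply, cvec_eq] at h1
        rw [← h1]
        have h2 : ∑ ι ∈ Lam2 n, H (Phi η ι) * cfull n (Phi η ι) α = ∑ β ∈ J, H β * cfull n β α := by
          rw [hJe, Finset.sum_image hinj]
        refine h2.trans ?_
        rw [← Finset.sum_coe_sort J, ← Equiv.sum_comp e]
        refine Finset.sum_congr rfl fun i _ => ?_
        rw [hHe])
    ext i
    rw [← hHe i]
    have hm : (e i).1 ∈ (Lam2 n).image (Phi η) := hJe ▸ (e i).2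
    obtain ⟨ι, hι, hιe⟩ := Finset.mem_image.1 hm
    rw [← hιe]
    exact hzero ι hι
end

section
/- For every k ∈ {1,…,n} and every J ∈ S_{A_n}, one has f_k(m_{J_{η_k}}) ≤ f_k(m_J); that is, J_{η_k} realizes the minimum of f_k(m_J) over all J ∈ S_{A_n}. -/
open Finset

structure IsPath (k K : ℕ) (a b s t : ℕ → ℕ) : Prop where
  a0 : a 0 = 0
  b0 : b 0 = 0
  s0 : s 0 = 0
  t0 : t 0 = 0
  step : ∀ j, (a (j+1) = a j + 1 ∧ b (j+1) = b j ∧ s (j+1) = a j + 1 ∧ t (j+1) = 0 ∧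
      k * (a j + 1) ≤ K * (b j + 1)) ∨
    (a (j+1) = a j ∧ b (j+1) = b j + 1 ∧ s (j+1) = 0 ∧ t (j+1) = b j + 1 ∧
      K * (b j + 1) ≤ k * (a j + 1))

namespace IsPath
variable {k K : ℕ} {a b s t : ℕ → ℕ}

lemma add_eq (h : IsPath k K a b s t) (j : ℕ) : a j + b j = j := by
  induction j with
  | zero => simp [h.a0, h.b0]
  | succ j ih => rcases h.step j with h1 | h1 <;> omega

lemma exists_s (h : IsPath k K a b s t) (i : ℕ) : ∀ x ≤ a i, ∃ j ≤ i, s j = x ∧ t j = 0 := by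
  induction i with
  | zero => intro x hx; exact ⟨0, le_rfl, by have := h.a0; have := h.s0; omega, h.t0⟩
  | succ i ih =>
    intro x hx
    rcases h.step i with h1 | h1
    · by_cases hx2 : x ≤ a i
      · obtain ⟨j, hj, hh⟩ := ih x hx2
        exact ⟨j, by omega, hh⟩
      · exact ⟨i+1, le_rfl, by omega, by omega⟩
    · obtain ⟨j, hj, hh⟩ := ih x (by omega)
      exact ⟨j, by omega, hh⟩

lemma exists_t (h : IsPath k K a b s t) (i : ℕ) : ∀ x ≤ b i, ∃ j ≤ i, t j = x ∧ s j = 0 := by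
  induction i with
  | zero => intro x hx; exact ⟨0, le_rfl, by have := h.b0; have := h.t0; omega, h.s0⟩
  | succ i ih =>
    intro x hx
    rcases h.step i with h1 | h1
    · obtain ⟨j, hj, hh⟩ := ih x (by omega)
      exact ⟨j, by omega, hh⟩
    · by_cases hx2 : x ≤ b i
      · obtain ⟨j, hj, hh⟩ := ih x hx2
        exact ⟨j, by omega, hh⟩
      · exact ⟨i+1, le_rfl, by omega, by omega⟩

lemma inv (h : IsPath k K a b s t) (i : ℕ) : k * a i ≤ K * (b i + 1) ∧ K * b i ≤ k * (a i + 1) := by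
  induction i with
  | zero => simp [h.a0, h.b0]
  | succ i ih =>
    rcases h.step i with ⟨h1, h2, -, -, h3⟩ | ⟨h1, h2, -, -, h3⟩
    · rw [h1, h2]; constructor <;> nlinarith
    · rw [h1, h2]; constructor <;> nlinarith

lemma exists_a (h : IsPath k K a b s t) (hK : 1 ≤ K) (x : ℕ) : ∃ i, x ≤ a i := by
  by_contra hc
  push Not at hc
  have h1 := hc (x + k * (x+1) + 1)
  have h2 := h.add_eq (x + k * (x+1) + 1)
  have h3 := (h.inv (x + k * (x+1) + 1)).2
  have h4 : k * (x+1) + 1 ≤ b (x + k * (x+1) + 1) := by omega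
  have h5 : k * (a (x + k * (x+1) + 1) + 1) ≤ k * (x+1) := Nat.mul_le_mul_left _ (by omega)
  have h6 : b (x + k * (x+1) + 1) ≤ K * b (x + k * (x+1) + 1) := Nat.le_mul_of_pos_left _ hK
  omega

lemma exists_b (h : IsPath k K a b s t) (hk : 1 ≤ k) (x : ℕ) : ∃ i, x ≤ b i := by
  by_contra hc
  push Not at hc
  have h1 := hc (x + K * (x+1) + 1)
  have h2 := h.add_eq (x + K * (x+1) + 1)
  have h3 := (h.inv (x + K * (x+1) + 1)).1
  have h4 : K * (x+1) + 1 ≤ a (x + K * (x+1) + 1) := by omega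
  have h5 : K * (b (x + K * (x+1) + 1) + 1) ≤ K * (x+1) := Nat.mul_le_mul_left _ (by omega)
  have h6 : a (x + K * (x+1) + 1) ≤ k * a (x + K * (x+1) + 1) := Nat.le_mul_of_pos_left _ hk
  omega

/-- weight -/
def om (k K : ℕ) (s t : ℕ → ℕ) (i : ℕ) : ℕ := k * s i + K * t i

lemma mono1 (h : IsPath k K a b s t) (i : ℕ) : om k K s t i ≤ om k K s t (i+1) := by
  unfold om
  cases i with
  | zero => simp [h.s0, h.t0]
  | succ i =>
    rcases h.step i with ⟨h1, h2, h3, h4, h5⟩ | ⟨h1, h2, h3, h4, h5⟩ <;>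
    rcases h.step (i+1) with ⟨g1, g2, g3, g4, g5⟩ | ⟨g1, g2, g3, g4, g5⟩ <;>
    rw [h3, h4, g3, g4] <;> simp only [h1, h2] at * <;> nlinarith

lemma om_mono (h : IsPath k K a b s t) : Monotone (om k K s t) := monotone_nat_of_le_succ h.mono1

lemma strict_or (h : IsPath k K a b s t) (hk : 1 ≤ k) (hK : 1 ≤ K) (i : ℕ) :
    om k K s t i < om k K s t (i+1) ∨ (1 ≤ a (i+1) ∧ 1 ≤ b (i+1) ∧ k * a (i+1) = K * b (i+1)) := by
  have hm := h.mono1 i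
  by_contra hc
  push Not at hc
  obtain ⟨hc1, hc2⟩ := hc
  have he := le_antisymm hm hc1
  unfold om at he
  cases i with
  | zero =>
    rcases h.step 0 with ⟨g1, g2, g3, g4, g5⟩ | ⟨g1, g2, g3, g4, g5⟩ <;>
    rw [h.s0, h.t0, g3, g4] at he <;> simp at he <;> omega
  | succ i =>
    rcases h.step i with ⟨h1, h2, h3, h4, h5⟩ | ⟨h1, h2, h3, h4, h5⟩ <;>
    rcases h.step (i+1) with ⟨g1, g2, g3, g4, g5⟩ | ⟨g1, g2, g3, g4, g5⟩ <;>
    rw [h3, h4, g3, g4] at he <;> rw [g1, g2, h1, h2] at hc2 <;> rw [h1, h2] at g5 <;>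
    simp only [h1, h2] at he
    · nlinarith
    · exact hc2 (by omega) (by omega) (by nlinarith)
    · exact hc2 (by omega) (by omega) (by nlinarith)
    · nlinarith

lemma strict2 (h : IsPath k K a b s t) (hk : 1 ≤ k) (hK : 1 ≤ K) (i : ℕ) :
    om k K s t i < om k K s t (i+2) := by
  have m1 := h.mono1 i
  have m2 := h.mono1 (i+1)
  rcases h.strict_or hk hK i with h1 | ⟨h1, h2, h3⟩
  · exact lt_of_lt_of_le h1 m2
  rcases h.strict_or hk hK (i+1) with h1 | ⟨g1, g2, g3⟩
  · exact lt_of_le_of_lt m1 h1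
  exfalso
  rcases h.step (i+1) with ⟨e1, e2, -⟩ | ⟨e1, e2, -⟩ <;> rw [e1, e2] at g3 <;> nlinarith

lemma gap {n : ℕ} (h : IsPath k K a b s t) (hk : 1 ≤ k) (hK : 1 ≤ K) (hn : k + K = n + 1)
    {i j : ℕ} (hij : j < i) (hi : i ≤ n + 1) : om k K s t j + i ≤ om k K s t i + j + 1 := by
  by_cases hd : Nat.Coprime k K
  · have hs : ∀ i < n, om k K s t i + 1 ≤ om k K s t (i+1) := by
      intro i hi
      rcases h.strict_or hk hK i with h1 | ⟨h1, h2, h3⟩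
      · exact h1
      exfalso
      have d1 : K ∣ a (i+1) := hd.symm.dvd_of_dvd_mul_left ⟨_, h3⟩
      have d2 : k ∣ b (i+1) := hd.dvd_of_dvd_mul_left ⟨_, h3.symm⟩
      have := Nat.le_of_dvd h1 d1
      have := Nat.le_of_dvd h2 d2
      have := h.add_eq (i+1)
      omega
    have hg : ∀ m, j + m ≤ n → om k K s t j + m ≤ om k K s t (j+m) := by
      intro m
      induction m with
      | zero => simp
      | succ m ih =>
        intro hm
        have := ih (by omega)
        have := hs (j+m) (by omega)
        rw [← add_assoc j]
        omega
    by_cases hi2 : i ≤ n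
    · have := hg (i-j) (by omega)
      rw [show j + (i-j) = i by omega] at this
      omega
    · have := hg (n-j) (by omega)
      rw [show j + (n-j) = n by omega] at this
      have := h.om_mono (show n ≤ i by omega)
      omega
  · have hd2 : 2 ≤ Nat.gcd k K := by
      have : 0 < Nat.gcd k K := Nat.gcd_pos_of_pos_left _ hk
      unfold Nat.Coprime at hd
      omega
    have hdv : ∀ i, Nat.gcd k K ∣ om k K s t i := fun i =>
      dvd_add ((Nat.gcd_dvd_left k K).mul_right _) ((Nat.gcd_dvd_right k K).mul_right _)
    have h2 : ∀ i, om k K s t i + 2 ≤ om k K s t (i+2) := by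
      intro i
      have h3 := h.strict2 hk hK i
      have := Nat.le_of_dvd (by omega) (Nat.dvd_sub (hdv (i+2)) (hdv i))
      omega
    have hg : ∀ m, om k K s t j + m ≤ om k K s t (j+m) + 1 := by
      intro m
      induction m using Nat.strong_induction_on with
      | _ m ih =>
        match m with
        | 0 => simp
        | 1 => have := h.mono1 j; omega
        | m+2 =>
          have := ih m (by omega)
          have := h2 (j+m)
          rw [← add_assoc j]
          omega
    have := hg (i-j)
    rw [show j + (i-j) = i by omega] at this
    omega

lemma gap' {n : ℕ} (h : IsPath k K a b s t) (hk : 1 ≤ k) (hK : 1 ≤ K) (hn : k + K = n + 1)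
    {i j p q : ℕ} (hij : j < i) (hp : n + 1 ≤ p + i) (hq : q + j ≤ n) :
    q + om k K s t j ≤ p + om k K s t i := by
  by_cases hi : i ≤ n + 1
  · have := h.gap hk hK hn hij hi
    omega
  · have := h.gap hk hK hn (show j < n + 1 by omega) le_rfl
    have := h.om_mono (show n + 1 ≤ i by omega)
    omega

end IsPath

section alg
variable {R : Type*} [CommRing R] [Algebra ℂ R] {n k K : ℕ} {a b s t : ℕ → ℕ} {u w g : R}
open IsPath

/-- basis elements -/
def Hh (u g : R) (s t : ℕ → ℕ) (i : ℕ) : R := u ^ s i * g ^ t i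

/-- span without degree bounds -/
def Mm (u w g : R) (s t : ℕ → ℕ) (p i : ℕ) : Submodule ℂ R :=
  Submodule.span ℂ {x | ∃ j q, j ≤ i ∧ p ≤ q ∧ x = w ^ q * Hh u g s t j}

/-- span with degree bounds -/
def Nn (n : ℕ) (u w g : R) (s t : ℕ → ℕ) (p i : ℕ) : Submodule ℂ R :=
  Submodule.span ℂ {x | ∃ j q, j ≤ i ∧ p ≤ q ∧ q + j ≤ n ∧ x = w ^ q * Hh u g s t j}

/-- span with weight bounds -/
def Ww (n k K : ℕ) (u w g : R) (s t : ℕ → ℕ) (W : ℕ) : Submodule ℂ R :=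
  Submodule.span ℂ {x | ∃ j q, q + j ≤ n ∧ q + om k K s t j ≤ W ∧ x = w ^ q * Hh u g s t j}

lemma Mm_mono {p p' i i' : ℕ} (hp : p' ≤ p) (hi : i ≤ i') :
    Mm u w g s t p i ≤ Mm u w g s t p' i' := by
  apply Submodule.span_mono
  rintro x ⟨j, q, h1, h2, h3⟩
  exact ⟨j, q, by omega, by omega, h3⟩

lemma Nn_mono {p p' i i' : ℕ} (hp : p' ≤ p) (hi : i ≤ i') :
    Nn n u w g s t p i ≤ Nn n u w g s t p' i' := by
  apply Submodule.span_mono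
  rintro x ⟨j, q, h1, h2, h3, h4⟩
  exact ⟨j, q, by omega, by omega, h3, h4⟩

lemma Ww_mono {W W' : ℕ} (hp : W ≤ W') :
    Ww n k K u w g s t W ≤ Ww n k K u w g s t W' := by
  apply Submodule.span_mono
  rintro x ⟨j, q, h1, h2, h3⟩
  exact ⟨j, q, by omega, by omega, h3⟩

lemma rel_mul (hrel : u * g = -u - g + ∑ i ∈ range n, ((n+1).choose (i+1) : ℂ) • w ^ (i+1))
    (x y q : ℕ) : u ^ (x+1) * g ^ (y+1) * w ^ q =
      - (u ^ (x+1) * g ^ y * w ^ q) - u ^ x * g ^ (y+1) * w ^ q +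
      ∑ i ∈ range n, ((n+1).choose (i+1) : ℂ) • (u ^ x * g ^ y * w ^ (q + (i+1))) := by
  have : u ^ (x+1) * g ^ (y+1) * w ^ q = u ^ x * g ^ y * w ^ q * (u * g) := by ring
  rw [this, hrel, mul_add, mul_sum]
  congr 1
  · ring
  · apply sum_congr rfl
    intro i _
    rw [mul_smul_comm]
    congr 1
    ring

lemma mem_Mm_pure (h : IsPath k K a b s t) {x y q p i : ℕ} (hx : x ≤ a i) (hy : y ≤ b i)
    (hq : p ≤ q)
    (hrel : u * g = -u - g + ∑ i ∈ range n, ((n+1).choose (i+1) : ℂ) • w ^ (i+1)) :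
    u ^ x * g ^ y * w ^ q ∈ Mm u w g s t p i := by
  induction hm : x + y using Nat.strong_induction_on generalizing x y q with
  | _ m ih =>
    subst hm
    rcases x with _ | x
    · obtain ⟨j, hj, hh1, hh2⟩ := h.exists_t i y hy
      apply Submodule.subset_span
      exact ⟨j, q, hj, hq, by rw [Hh, hh1, hh2]; ring⟩
    rcases y with _ | y
    · obtain ⟨j, hj, hh1, hh2⟩ := h.exists_s i (x+1) hx
      apply Submodule.subset_span
      exact ⟨j, q, hj, hq, by rw [Hh, hh1, hh2]; ring⟩
    rw [rel_mul hrel]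
    refine Submodule.add_mem _ (Submodule.sub_mem _ (Submodule.neg_mem _ ?_) ?_)
      (Submodule.sum_mem _ fun l hl => Submodule.smul_mem _ _ ?_)
    · exact ih _ (by omega) (by omega) (by omega) hq rfl
    · exact ih _ (by omega) (by omega) (by omega) hq rfl
    · exact ih _ (by omega) (by omega) (by omega) (by omega) rfl

lemma step_u (h : IsPath k K a b s t) {y q i : ℕ} (hy : y ≤ b i)
    (hrel : u * g = -u - g + ∑ i ∈ range n, ((n+1).choose (i+1) : ℂ) • w ^ (i+1)) :
    u ^ (a i + 1) * g ^ y * w ^ q - (-1) ^ y * (u ^ (a i + 1) * w ^ q) ∈ Mm u w g s t q i := by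
  induction y with
  | zero => simp
  | succ y ih =>
    have e : u ^ (a i + 1) * g ^ (y+1) * w ^ q - (-1) ^ (y+1) * (u ^ (a i + 1) * w ^ q) =
      - (u ^ (a i + 1) * g ^ y * w ^ q - (-1) ^ y * (u ^ (a i + 1) * w ^ q))
      - u ^ a i * g ^ (y+1) * w ^ q +
      ∑ l ∈ range n, ((n+1).choose (l+1) : ℂ) • (u ^ a i * g ^ y * w ^ (q + (l+1))) := by
      rw [rel_mul hrel]; ring
    rw [e]
    refine Submodule.add_mem _ (Submodule.sub_mem _ (Submodule.neg_mem _ (ih (by omega))) ?_)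
      (Submodule.sum_mem _ fun l hl => Submodule.smul_mem _ _ ?_)
    · exact mem_Mm_pure h le_rfl hy le_rfl hrel
    · exact mem_Mm_pure h le_rfl (by omega) (by omega) hrel

lemma step_g (h : IsPath k K a b s t) {x q i : ℕ} (hx : x ≤ a i)
    (hrel : u * g = -u - g + ∑ i ∈ range n, ((n+1).choose (i+1) : ℂ) • w ^ (i+1)) :
    u ^ x * g ^ (b i + 1) * w ^ q - (-1) ^ x * (g ^ (b i + 1) * w ^ q) ∈ Mm u w g s t q i := by
  induction x with
  | zero => simp
  | succ x ih =>
    have e : u ^ (x + 1) * g ^ (b i + 1) * w ^ q - (-1) ^ (x+1) * (g ^ (b i + 1) * w ^ q) =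
      - (u ^ x * g ^ (b i + 1) * w ^ q - (-1) ^ x * (g ^ (b i + 1) * w ^ q))
      - u ^ (x+1) * g ^ b i * w ^ q +
      ∑ l ∈ range n, ((n+1).choose (l+1) : ℂ) • (u ^ x * g ^ b i * w ^ (q + (l+1))) := by
      rw [rel_mul hrel]; ring
    rw [e]
    refine Submodule.add_mem _ (Submodule.sub_mem _ (Submodule.neg_mem _ (ih (by omega))) ?_)
      (Submodule.sum_mem _ fun l hl => Submodule.smul_mem _ _ ?_)
    · exact mem_Mm_pure h hx le_rfl le_rfl hrel
    · exact mem_Mm_pure h (by omega) le_rfl (by omega) hrel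

lemma neg_one_pow_mem {S : Submodule ℂ R} {m : ℕ} {x : R} (h : (-1) ^ m * x ∈ S) : x ∈ S := by
  rcases neg_one_pow_eq_or R m with e | e <;> rw [e] at h
  · simpa using h
  · simpa using h

lemma H_succ_mem (h : IsPath k K a b s t) {q i : ℕ} (hq : n + 1 ≤ q + (i + 1))
    (hrel : u * g = -u - g + ∑ i ∈ range n, ((n+1).choose (i+1) : ℂ) • w ^ (i+1))
    (hvan : ∀ x y q, n < x + y + q → u ^ x * g ^ y * w ^ q = 0) :
    w ^ q * Hh u g s t (i+1) ∈ Mm u w g s t q i := by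
  have hab := h.add_eq i
  rcases h.step i with ⟨h1, h2, h3, h4, h5⟩ | ⟨h1, h2, h3, h4, h5⟩
  · have := step_u (q := q) h (le_refl (b i)) hrel
    rw [hvan _ _ _ (by omega), zero_sub] at this
    have := neg_one_pow_mem ((Submodule.neg_mem_iff _).1 this)
    rw [Hh, h3, h4]
    convert this using 1; ring
  · have := step_g (q := q) h (le_refl (a i)) hrel
    rw [hvan _ _ _ (by omega), zero_sub] at this
    have := neg_one_pow_mem ((Submodule.neg_mem_iff _).1 this)
    rw [Hh, h3, h4]
    convert this using 1; ring

lemma Mm_le_Nn (h : IsPath k K a b s t) (p i : ℕ)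
    (hrel : u * g = -u - g + ∑ i ∈ range n, ((n+1).choose (i+1) : ℂ) • w ^ (i+1))
    (hvan : ∀ x y q, n < x + y + q → u ^ x * g ^ y * w ^ q = 0) :
    Mm u w g s t p i ≤ Nn n u w g s t p i := by
  induction i generalizing p with
  | zero =>
    apply Submodule.span_le.2
    rintro x ⟨j, q, h1, h2, rfl⟩
    by_cases hq : q + j ≤ n
    · exact Submodule.subset_span ⟨j, q, h1, h2, hq, rfl⟩
    · have hj : j = 0 := by omega
      subst hj
      have := hvan 0 0 q (by omega)
      have e : w ^ q * Hh u g s t 0 = 0 := by rw [← this, Hh, h.s0, h.t0]; ring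
      rw [e]; exact Submodule.zero_mem _
  | succ i ih =>
    apply Submodule.span_le.2
    rintro x ⟨j, q, h1, h2, rfl⟩
    by_cases hq : q + j ≤ n
    · exact Submodule.subset_span ⟨j, q, h1, h2, hq, rfl⟩
    by_cases hj : j ≤ i
    · exact Nn_mono le_rfl (by omega) (ih p (Submodule.subset_span ⟨j, q, hj, h2, rfl⟩))
    · have hj : j = i + 1 := by omega
      subst hj
      exact Nn_mono h2 (by omega) (ih q (H_succ_mem h (by omega) hrel hvan))

lemma H_mem_Ww (h : IsPath k K a b s t) (hk : 1 ≤ k) (hK : 1 ≤ K) (hn : k + K = n + 1) (p i : ℕ)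
    (hrel : u * g = -u - g + ∑ i ∈ range n, ((n+1).choose (i+1) : ℂ) • w ^ (i+1))
    (hvan : ∀ x y q, n < x + y + q → u ^ x * g ^ y * w ^ q = 0) :
    w ^ p * Hh u g s t i ∈ Ww n k K u w g s t (p + om k K s t i) := by
  by_cases hp : p + i ≤ n
  · exact Submodule.subset_span ⟨i, p, hp, le_rfl, rfl⟩
  rcases i with _ | i
  · have := hvan 0 0 p (by omega)
    have e : w ^ p * Hh u g s t 0 = 0 := by rw [← this, Hh, h.s0, h.t0]; ring
    rw [e]; exact Submodule.zero_mem _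
  have h1 := Mm_le_Nn h p i hrel hvan (H_succ_mem h (by omega) hrel hvan)
  refine (Submodule.span_mono ?_) h1
  rintro x ⟨j, q, g1, g2, g3, rfl⟩
  exact ⟨j, q, g3, h.gap' hk hK hn (by omega) (by omega) g3, rfl⟩

theorem mem_Ww (h : IsPath k K a b s t) (hk : 1 ≤ k) (hK : 1 ≤ K) (hn : k + K = n + 1)
    (x y q : ℕ)
    (hrel : u * g = -u - g + ∑ i ∈ range n, ((n+1).choose (i+1) : ℂ) • w ^ (i+1))
    (hvan : ∀ x y q, n < x + y + q → u ^ x * g ^ y * w ^ q = 0) :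
    u ^ x * g ^ y * w ^ q ∈ Ww n k K u w g s t (k * x + K * y + q) := by
  induction hm : x + y using Nat.strong_induction_on generalizing x y q with
  | _ m ih =>
    subst hm
    rcases x with _ | x
    · obtain ⟨i, hi⟩ := h.exists_b hk y
      obtain ⟨j, hj, hh1, hh2⟩ := h.exists_t i y hi
      have := H_mem_Ww h hk hK hn q j hrel hvan
      rw [Hh, om, hh1, hh2] at this
      convert this using 1
      · congr 1; ring
      · ring
    rcases y with _ | y
    · obtain ⟨i, hi⟩ := h.exists_a hK (x+1)
      obtain ⟨j, hj, hh1, hh2⟩ := h.exists_s i (x+1) hi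
      have := H_mem_Ww h hk hK hn q j hrel hvan
      rw [Hh, om, hh1, hh2] at this
      convert this using 1
      · congr 1; ring
      · ring
    rw [rel_mul hrel]
    refine Submodule.add_mem _ (Submodule.sub_mem _ (Submodule.neg_mem _ ?_) ?_)
      (Submodule.sum_mem _ fun l hl => Submodule.smul_mem _ _ ?_)
    · exact Ww_mono (by nlinarith) (ih _ (by omega) (x+1) y q rfl)
    · exact Ww_mono (by nlinarith) (ih _ (by omega) x (y+1) q rfl)
    · have := mem_range.1 hl
      exact Ww_mono (by nlinarith) (ih _ (by omega) x y (q + (l+1)) rfl)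

end alg


section poly
open Polynomial

/-- coefficients -/
noncomputable def phi (n : ℕ) : ℂ[X][X] →ₗ[ℂ] (Lam2 n → ℂ) where
  toFun f α := (f.coeff α.1.2).coeff α.1.1
  map_add' f g := by ext α; simp
  map_smul' c f := by ext α; simp

/-- vanishing to order m -/
def Fil (m : ℕ) (f : ℂ[X][X]) : Prop := ∀ i j, i + j < m → (f.coeff j).coeff i = 0

lemma Fil.mul {m l : ℕ} {f g : ℂ[X][X]} (hf : Fil m f) (hg : Fil l g) : Fil (m+l) (f * g) := by
  intro i j hij
  rw [Polynomial.coeff_mul, Polynomial.finsetSum_coeff]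
  apply sum_eq_zero
  intro x hx
  rw [Polynomial.coeff_mul]
  apply sum_eq_zero
  intro y hy
  rw [HasAntidiagonal.mem_antidiagonal] at hx hy
  by_cases h : y.1 + x.1 < m
  · rw [hf _ _ h, zero_mul]
  · rw [hg _ _ (by omega), mul_zero]

lemma Fil.pow {f : ℂ[X][X]} (hf : Fil 1 f) (m : ℕ) : Fil m (f ^ m) := by
  induction m with
  | zero => intro i j h; omega
  | succ m ih => rw [pow_succ]; exact ih.mul hf

/-- the ideal -/
def Iid (n : ℕ) : Ideal ℂ[X][X] where
  carrier := {f | Fil (n+1) f}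
  add_mem' := by
    intro f g hf hg i j h
    simp [hf i j h, hg i j h]
  zero_mem' := by intro i j h; simp
  smul_mem' := by
    intro c f hf
    have h0 : Fil 0 c := by intro i j h; omega
    have := h0.mul hf
    rw [zero_add] at this
    exact this

lemma phi_Iid {n : ℕ} {f : ℂ[X][X]} (hf : f ∈ Iid n) : phi n f = 0 := by
  ext α
  have := α.2
  simp only [Lam2, mem_filter] at this
  exact hf _ _ (by omega)

lemma phi_one (n : ℕ) : phi n 1 = 0 := by
  ext α
  have := α.2
  simp only [Lam2, mem_filter] at this
  change ((1 : ℂ[X][X]).coeff α.1.2).coeff α.1.1 = 0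
  rw [Polynomial.coeff_one]
  split_ifs with h
  · rw [Polynomial.coeff_one, if_neg (by omega)]
  · simp

/-- x variable -/
noncomputable def pu : ℂ[X][X] := C X
/-- w -/
noncomputable def pw : ℂ[X][X] := (1 + C X) * (1 + X) - 1
/-- g -/
noncomputable def pg (n : ℕ) : ℂ[X][X] := (1 + C X) ^ n * (1 + X) ^ (n+1) - 1

lemma fil_pu : Fil 1 pu := by
  intro i j h
  obtain ⟨rfl, rfl⟩ : i = 0 ∧ j = 0 := by omega
  simp [pu]

lemma fil_pw : Fil 1 pw := by
  intro i j h
  obtain ⟨rfl, rfl⟩ : i = 0 ∧ j = 0 := by omega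
  simp [pw, Polynomial.mul_coeff_zero]

lemma coeff_zero_pow' {R : Type*} [CommSemiring R] (f : R[X]) (m : ℕ) :
    (f ^ m).coeff 0 = f.coeff 0 ^ m := by
  simp [Polynomial.coeff_zero_eq_eval_zero]

lemma fil_pg (n : ℕ) : Fil 1 (pg n) := by
  intro i j h
  obtain ⟨rfl, rfl⟩ : i = 0 ∧ j = 0 := by omega
  simp [pg, Polynomial.mul_coeff_zero, coeff_zero_pow']

lemma vbar_eq (n : ℕ) (v : ℕ × ℕ) : vbar n v = phi n ((1 + C X) ^ v.1 * (1 + X) ^ v.2) := by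
  ext α
  change _ = ((((1 + C X) ^ v.1 * (1 + X) ^ v.2 : ℂ[X][X])).coeff α.1.2).coeff α.1.1
  have e : (1 + C X : ℂ[X][X]) ^ v.1 = C ((1 + X) ^ v.1) := by simp
  rw [e, Polynomial.coeff_C_mul, Polynomial.coeff_one_add_X_pow]
  have e2 : ((v.2.choose α.1.2 : ℕ) : ℂ[X]) = C ((v.2.choose α.1.2 : ℕ) : ℂ) := by simp
  rw [e2, Polynomial.coeff_mul_C, Polynomial.coeff_one_add_X_pow, vbar]
  push_cast
  rfl

lemma sub_one_pow' {R : Type*} [CommRing R] [Algebra ℂ R] (f : R) (m : ℕ) :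
    (f - 1) ^ m = ∑ i ∈ range (m+1), ((-1 : ℂ) ^ (m - i) * (m.choose i : ℂ)) • f ^ i := by
  rw [sub_eq_add_neg, add_pow]
  apply sum_congr rfl
  intro i _
  rw [Algebra.smul_def]
  simp
  ring

lemma triple {R : Type*} [CommRing R] [Algebra ℂ R] (U V Z : R) (b1 b2 b3 : ℕ) :
    (U - 1) ^ b1 * ((V - 1) ^ b2 * (Z - 1) ^ b3) =
    ∑ γ ∈ (range (b1+1)) ×ˢ (range (b2+1)) ×ˢ (range (b3+1)),
    (((-1 : ℂ) ^ ((b1 + b2 + b3) - (γ.1 + γ.2.1 + γ.2.2))) *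
      ((b1.choose γ.1 * b2.choose γ.2.1 * b3.choose γ.2.2 : ℕ) : ℂ)) •
      (U ^ γ.1 * (V ^ γ.2.1 * Z ^ γ.2.2)) := by
  rw [sub_one_pow', sub_one_pow', sub_one_pow', sum_mul_sum, ← sum_product', sum_mul_sum,
    ← sum_product']
  apply sum_congr rfl
  intro γ h
  simp only [mem_product, mem_range] at h
  obtain ⟨h1, h2, h3⟩ := h
  rw [smul_mul_smul_comm, smul_mul_smul_comm]
  congr 1
  rw [show b1 + b2 + b3 - (γ.1 + γ.2.1 + γ.2.2) = (b1 - γ.1) + (b2 - γ.2.1) + (b3 - γ.2.2) by omega]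
  push_cast
  ring

lemma mono_id {R : Type*} [CommRing R] (U V : R) (n i j l : ℕ) :
    U ^ (i + j + n * l) * V ^ (j + (n+1) * l) =
      U ^ i * ((U * V) ^ j * (U ^ n * V ^ (n+1)) ^ l) := by
  ring

lemma cvec_eq_s5 (n : ℕ) (β : ℕ × ℕ × ℕ) :
    cvec n β = phi n (pu ^ β.1 * pg n ^ β.2.2 * pw ^ β.2.1) := by
  have e : pu ^ β.1 * pg n ^ β.2.2 * pw ^ β.2.1 =
      ((1 + C X) - 1) ^ β.1 * (((1 + C X) * (1 + X) - 1) ^ β.2.1 *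
        ((1 + C X) ^ n * (1 + X) ^ (n+1) - 1) ^ β.2.2) := by
    rw [add_sub_cancel_left, mul_assoc, mul_comm (pg n ^ _), pu, pw, pg]
  rw [e, triple, map_sum, cvec]
  apply sum_congr rfl
  intro γ h
  rw [vbar_eq, map_smul]
  simp only [Amap]
  rw [mono_id]

lemma pvan (n x y q : ℕ) (h : n < x + y + q) : pu ^ x * pg n ^ y * pw ^ q ∈ Iid n := by
  have h1 : Fil (x + y + q) (pu ^ x * pg n ^ y * pw ^ q) :=
    ((fil_pu.pow x).mul ((fil_pg n).pow y)).mul (fil_pw.pow q)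
  intro i j hij
  exact h1 i j (by omega)

lemma prel (n : ℕ) : pu * pg n =
    -pu - pg n + ∑ i ∈ range (n+1), ((n+1).choose (i+1) : ℂ) • pw ^ (i+1) := by
  have h : (1 + pu) * (1 + pg n) = (pw + 1) ^ (n+1) := by
    simp only [pu, pg, pw, sub_add_cancel, mul_pow]; ring
  rw [add_pow, sum_range_succ'] at h
  simp only [one_pow, mul_one, pow_zero, Nat.choose_zero_right, Nat.cast_one] at h
  have e : ∑ i ∈ range (n+1), ((n+1).choose (i+1) : ℂ) • pw ^ (i+1) =
     ∑ i ∈ range (n+1), pw ^ (i+1) * ((n+1).choose (i+1) : ℂ[X][X]) := by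
    apply sum_congr rfl
    intro i _
    rw [Algebra.smul_def]
    simp
    ring
  rw [e]
  linear_combination h

theorem cvec_mem_aux {R : Type*} [CommRing R] [Algebra ℂ R] {n k K : ℕ} {a b s t : ℕ → ℕ} (h : IsPath k K a b s t) (hk : 1 ≤ k) (hK : 1 ≤ K)
    (hn : k + K = n + 1) (β : ℕ × ℕ × ℕ) {W : ℕ} (hW : k * β.1 + β.2.1 + K * β.2.2 ≤ W)
    (q : ℂ[X][X] →ₐ[ℂ] R) (hker : ∀ f, q f = 0 ↔ f ∈ Iid n) :
    cvec n β ∈ Submodule.span ℂ ((((Lam2 n).filter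
      (fun α => α.2 + IsPath.om k K s t α.1 ≤ W)).image
      (fun α => phi n (pw ^ α.2 * Hh pu (pg n) s t α.1)) : Finset _) : Set (Lam2 n → ℂ)) := by
  have hvan : ∀ x y l, n < x + y + l → (q pu) ^ x * (q (pg n)) ^ y * (q pw) ^ l = 0 := by
    intro x y l hl
    rw [← map_pow, ← map_pow, ← map_pow, ← map_mul, ← map_mul, hker]
    exact pvan n x y l hl
  have hrel : q pu * q (pg n) = - q pu - q (pg n) +
      ∑ i ∈ range n, ((n+1).choose (i+1) : ℂ) • (q pw) ^ (i+1) := by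
    have := congrArg q (prel n)
    rw [sum_range_succ] at this
    simp only [map_mul, map_add, map_sub, map_neg, map_sum, map_smul, map_pow] at this
    rw [this]
    have h0 := hvan 0 0 (n+1) (by omega)
    simp only [pow_zero, one_mul] at h0
    rw [h0, smul_zero, add_zero]
  have hm := Ww_mono (show k * β.1 + K * β.2.2 + β.2.1 ≤ W by omega)
    (mem_Ww h hk hK hn β.1 β.2.2 β.2.1 hrel hvan)
  have hset : {x | ∃ j p, p + j ≤ n ∧ p + IsPath.om k K s t j ≤ W ∧
      x = (q pw) ^ p * Hh (q pu) (q (pg n)) s t j} = q.toLinearMap '' {x | ∃ j p, p + j ≤ n ∧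
        p + IsPath.om k K s t j ≤ W ∧ x = pw ^ p * Hh pu (pg n) s t j} := by
    ext x
    constructor
    · rintro ⟨j, p, h1, h2, rfl⟩
      exact ⟨_, ⟨j, p, h1, h2, rfl⟩, by simp [Hh]⟩
    · rintro ⟨_, ⟨j, p, h1, h2, rfl⟩, rfl⟩
      exact ⟨j, p, h1, h2, by simp [Hh]⟩
  rw [Ww, hset, ← Submodule.map_span] at hm
  obtain ⟨y, hy, hyq⟩ := hm
  have hc : cvec n β = phi n y := by
    rw [cvec_eq_s5, ← sub_eq_zero, ← map_sub]
    apply phi_Iid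
    rw [← hker, map_sub, sub_eq_zero]
    rw [AlgHom.toLinearMap_apply] at hyq
    rw [hyq]
    simp
  rw [hc]
  have h3 := Submodule.mem_map_of_mem (f := phi n) hy
  rw [Submodule.map_span] at h3
  refine (Submodule.span_le.2 ?_) h3
  rintro _ ⟨_, ⟨j, p, h1, h2, rfl⟩, rfl⟩
  by_cases h0 : 1 ≤ j + p
  · apply Submodule.subset_span
    rw [coe_image]
    refine ⟨(j, p), ?_, rfl⟩
    simp only [Lam2, coe_filter, mem_filter, mem_product, mem_range, Set.mem_ofPred_eq]
    refine ⟨⟨⟨by omega, by omega⟩, by omega, by omega⟩, h2⟩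
  · obtain ⟨rfl, rfl⟩ : j = 0 ∧ p = 0 := by omega
    simp only [Hh, h.s0, h.t0, pow_zero, mul_one, phi_one]
    exact Submodule.zero_mem _

theorem cvec_mem {n k K : ℕ} {a b s t : ℕ → ℕ} (h : IsPath k K a b s t) (hk : 1 ≤ k) (hK : 1 ≤ K)
    (hn : k + K = n + 1) (β : ℕ × ℕ × ℕ) {W : ℕ} (hW : k * β.1 + β.2.1 + K * β.2.2 ≤ W) :
    cvec n β ∈ Submodule.span ℂ ((((Lam2 n).filter
      (fun α => α.2 + IsPath.om k K s t α.1 ≤ W)).image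
      (fun α => phi n (pw ^ α.2 * Hh pu (pg n) s t α.1)) : Finset _) : Set (Lam2 n → ℂ)) :=
  cvec_mem_aux (R := ℂ[X][X] ⧸ Iid n) h hk hK hn β hW (Ideal.Quotient.mkₐ ℂ (Iid n))
    (fun _ => Ideal.Quotient.eq_zero_iff_mem)

end poly

lemma card_coe_set {α : Type*} (S : Finset α) [Fintype ((S : Set α))] :
    Fintype.card (S : Set α) = S.card := by
  rw [← Set.toFinset_card]; simp

lemma sum_le_of_counts {ι κ : Type*} (A : Finset ι) (B : Finset κ) (f : ι → ℕ) (g : κ → ℕ)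
    (hc : A.card = B.card)
    (h : ∀ W, (A.filter (fun x => f x ≤ W)).card ≤ (B.filter (fun x => g x ≤ W)).card) :
    ∑ x ∈ B, g x ≤ ∑ x ∈ A, f x := by
  set M := ∑ x ∈ B, g x + ∑ x ∈ A, f x with hM
  have key : ∀ {τ : Type _} (D : Finset τ) (e : τ → ℕ), (∀ x ∈ D, e x ≤ M) →
      ∑ x ∈ D, e x + ∑ W ∈ range M, (D.filter (fun x => e x ≤ W)).card = D.card * M := by
    intro τ D e he
    simp only [card_filter]
    rw [sum_comm, ← sum_add_distrib, ← smul_eq_mul, ← sum_const]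
    apply sum_congr rfl
    intro x hx
    rw [← card_filter]
    have : (range M).filter (fun W => e x ≤ W) = Ico (e x) M := by
      ext W; simp; omega
    rw [this, Nat.card_Ico]
    have := he x hx
    omega
  have key2 : ∀ {τ : Type _} (D : Finset τ) (e : τ → ℕ), (∀ x ∈ D, e x ≤ M) →
      ∑ x ∈ D, e x + ∑ W ∈ range M, (D.filter (fun x => e x ≤ W)).card = D.card * M := by
    intro τ D e he
    simp only [card_filter]
    rw [sum_comm, ← sum_add_distrib, ← smul_eq_mul, ← sum_const]
    apply sum_congr rfl
    intro x hx
    rw [← card_filter]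
    have : (range M).filter (fun W => e x ≤ W) = Ico (e x) M := by
      ext W; simp; omega
    rw [this, Nat.card_Ico]
    have := he x hx
    omega
  have h1 := key A f (fun x hx => by
    have := single_le_sum (f := f) (fun i _ => Nat.zero_le _) hx
    omega)
  have h2 := key2 B g (fun x hx => by
    have := single_le_sum (f := g) (fun i _ => Nat.zero_le _) hx
    omega)
  have h3 := sum_le_sum (s := range M) (fun W _ => h W)
  rw [hc] at h1
  omega

theorem lower_bound {n k K : ℕ} {a b s t : ℕ → ℕ} (h : IsPath k K a b s t) (hk : 1 ≤ k) (hK : 1 ≤ K)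
    (hn : k + K = n + 1) (J : Finset (ℕ × ℕ × ℕ)) (hJ : memSA n J) :
    ∑ α ∈ Lam2 n, (α.2 + IsPath.om k K s t α.1) ≤ ∑ β ∈ J, (k * β.1 + β.2.1 + K * β.2.2) := by
  obtain ⟨-, hcard, hdet⟩ := hJ
  apply sum_le_of_counts _ _ _ _ hcard
  intro W
  have e : Lam2 n ≃ J := Fintype.equivOfCardEq (by simp [hcard])
  have hli := Matrix.linearIndependent_rows_of_det_ne_zero (hdet e)
  have hli2 : LinearIndependent ℂ (fun β : J => cvec n β.1) := by
    refine (linearIndependent_equiv e).1 ?_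
    exact hli
  set JW := J.filter (fun β => k * β.1 + β.2.1 + K * β.2.2 ≤ W) with hJW
  have hli3 : LinearIndependent ℂ (fun β : JW => cvec n β.1) := by
    exact hli2.comp (fun β : JW => (⟨β.1, (mem_filter.1 β.2).1⟩ : J)) (by
      intro x y hxy
      exact Subtype.ext (congrArg (fun z : J => z.1) hxy))
  have := linearIndependent_le_span' _ hli3 _ (by
    rintro _ ⟨β, rfl⟩
    exact cvec_mem h hk hK hn β.1 (mem_filter.1 β.2).2)
  simp only [Cardinal.mk_fintype, Nat.cast_le, Fintype.card_coe] at this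
  rw [card_coe_set] at this
  exact this.trans card_image_le


section eta
variable {n k : ℕ}

lemma fk_one : fk k (1, 0) = (k : ℤ) := by simp [fk]

lemma fk_n (hkn : k ≤ n) : fk k (n, n+1) = ((n + 1 - k : ℕ) : ℤ) := by
  rw [fk]; push_cast [Nat.cast_sub (show k ≤ n + 1 by omega)]; ring

/-- type of a block -/
def ty (n k l : ℕ) : Prop := (zk n k = true) ↔ Odd l

instance tyDec (n k l : ℕ) : Decidable (ty n k l) := by unfold ty; infer_instance

lemma tval_u (hk1 : 1 ≤ k) (hkn : k ≤ n) (l O E : ℕ) (h : ty n k l) :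
    tval n k l O E = ((n+1-k) * ((if Odd l then E else O) + 1)) / k := by
  unfold ty at h
  simp only [tval]
  rw [if_pos h]
  have : {m : ℕ | (m : ℤ) * fk k (1, 0) ≤ fk k (((if Odd l then E else O) + 1) * n,
      ((if Odd l then E else O) + 1) * (n+1))} =
      Set.Iic (((n+1-k) * ((if Odd l then E else O) + 1)) / k) := by
    ext m
    have e : fk k (((if Odd l then E else O) + 1) * n,
      ((if Odd l then E else O) + 1) * (n+1)) =
        (((n+1-k) * ((if Odd l then E else O) + 1) : ℕ) : ℤ) := by
      rw [fk]; push_cast [Nat.cast_sub (show k ≤ n + 1 by omega)]; ring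
    simp only [Set.mem_ofPred_eq, Set.mem_Iic]
    rw [Nat.le_div_iff_mul_le hk1, e, fk_one]
    exact_mod_cast Iff.rfl
  rw [this, csSup_Iic]

lemma tval_g (hk1 : 1 ≤ k) (hkn : k ≤ n) (l O E : ℕ) (h : ¬ ty n k l) :
    tval n k l O E = (k * ((if Odd l then E else O) + 1)) / (n+1-k) := by
  unfold ty at h
  simp only [tval]
  rw [if_neg h]
  have : {m : ℕ | (m : ℤ) * fk k (n, n+1) ≤ fk k ((if Odd l then E else O) + 1, 0)} =
      Set.Iic ((k * ((if Odd l then E else O) + 1)) / (n+1-k)) := by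
    ext m
    have e : fk k ((if Odd l then E else O) + 1, 0) =
        ((k * ((if Odd l then E else O) + 1) : ℕ) : ℤ) := by
      rw [fk]; push_cast; ring
    simp only [Set.mem_ofPred_eq, Set.mem_Iic]
    rw [Nat.le_div_iff_mul_le (by omega), e, fk_n hkn]
    exact_mod_cast Iff.rfl
  rw [this, csSup_Iic]

/-- u counts -/
noncomputable def Uc (n k l : ℕ) : ℕ := if zk n k = true then (oeSums n k l).1 else (oeSums n k l).2
/-- g counts -/
noncomputable def Gc (n k l : ℕ) : ℕ := if zk n k = true then (oeSums n k l).2 else (oeSums n k l).1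

lemma UG (n k l : ℕ) : Uc n k l + Gc n k l = (oeSums n k l).1 + (oeSums n k l).2 := by
  unfold Uc Gc; split_ifs <;> omega

lemma oe_succ (n k l : ℕ) : oeSums n k (l+1) = if Odd (l+1) then
    ((oeSums n k l).1 + dk n k (l+1), (oeSums n k l).2) else
    ((oeSums n k l).1, (oeSums n k l).2 + dk n k (l+1)) := by
  simp only [oeSums, dk]

lemma sum_oe (n k l : ℕ) :
    (∑ i ∈ range (l+1), if Odd i then dk n k i else 0) = (oeSums n k l).1 ∧
    (∑ i ∈ range (l+1), if Odd i then 0 else dk n k i) = (oeSums n k l).2 := by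
  induction l with
  | zero => simp [oeSums, dk]
  | succ l ih =>
    rw [sum_range_succ, sum_range_succ _ (l+1), ih.1, ih.2, oe_succ]
    split_ifs <;> simp

lemma sum_d (n k l : ℕ) : ∑ i ∈ range (l+1), dk n k i = Uc n k l + Gc n k l := by
  rw [UG, ← (sum_oe n k l).1, ← (sum_oe n k l).2, ← sum_add_distrib]
  apply sum_congr rfl
  intro i _
  split_ifs <;> simp

lemma same_sum (n k l : ℕ) :
    (∑ i ∈ range (l+1), if (Odd i ↔ Odd (l+1)) then dk n k i else 0) =
      if ty n k (l+1) then Uc n k l else Gc n k l := by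
  by_cases ho : Odd (l+1)
  · simp only [ho, iff_true, ty, (sum_oe n k l).1, Uc, Gc]
    split_ifs <;> rfl
  · have : ∀ i, (if (Odd i ↔ Odd (l+1)) then dk n k i else 0) = if Odd i then 0 else dk n k i := by
      intro i; simp only [ho, iff_false]; split_ifs <;> simp_all [-Nat.not_odd_iff_even]
    simp only [this, (sum_oe n k l).2, ty, ho, iff_false, Uc, Gc]
    by_cases hz : zk n k = true <;> simp [hz, -Nat.not_odd_iff_even] <;>
      convert (sum_oe n k l).2

lemma succ_u (h : ty n k (l+1)) : Uc n k (l+1) = Uc n k l + dk n k (l+1) ∧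
    Gc n k (l+1) = Gc n k l := by
  unfold ty at h
  unfold Uc Gc
  rw [oe_succ]
  by_cases hz : zk n k = true <;> by_cases ho : Odd (l+1) <;> simp_all [-Nat.not_odd_iff_even]

lemma succ_g (h : ¬ ty n k (l+1)) : Uc n k (l+1) = Uc n k l ∧
    Gc n k (l+1) = Gc n k l + dk n k (l+1) := by
  unfold ty at h
  unfold Uc Gc
  rw [oe_succ]
  by_cases hz : zk n k = true <;> by_cases ho : Odd (l+1) <;> simp_all [-Nat.not_odd_iff_even]

lemma d_u (hk1 : 1 ≤ k) (hkn : k ≤ n) (h : ty n k (l+1)) (hS : Uc n k l + Gc n k l < n) :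
    dk n k (l+1) = min (n - (Uc n k l + Gc n k l))
      ((n+1-k) * (Gc n k l + 1) / k - Uc n k l) := by
  have hS' := hS
  rw [UG] at hS'
  simp only [dk]
  rw [if_pos hS', tval_u hk1 hkn _ _ _ h, UG]
  unfold ty at h
  unfold Uc Gc
  by_cases hz : zk n k = true <;> by_cases ho : Odd (l+1) <;> simp_all [-Nat.not_odd_iff_even]

lemma d_g (hk1 : 1 ≤ k) (hkn : k ≤ n) (h : ¬ ty n k (l+1)) (hS : Uc n k l + Gc n k l < n) :
    dk n k (l+1) = min (n - (Uc n k l + Gc n k l))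
      (k * (Uc n k l + 1) / (n+1-k) - Gc n k l) := by
  have hS' := hS
  rw [UG] at hS'
  simp only [dk]
  rw [if_pos hS', tval_g hk1 hkn _ _ _ h, UG]
  unfold ty at h
  unfold Uc Gc
  by_cases hz : zk n k = true <;> by_cases ho : Odd (l+1) <;> simp_all [-Nat.not_odd_iff_even]

lemma d_zero (hS : ¬ Uc n k l + Gc n k l < n) : dk n k (l+1) = 0 := by
  rw [UG] at hS
  simp only [dk]
  rw [if_neg hS]

lemma ty_succ (n k l : ℕ) : ty n k (l+1) ↔ ¬ ty n k l := by
  unfold ty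
  rw [Nat.odd_add_one]
  tauto

lemma block_inv (hk1 : 1 ≤ k) (hkn : k ≤ n) (l : ℕ) :
    Uc n k l + Gc n k l ≤ n ∧ (Uc n k l + Gc n k l < n →
      (ty n k (l+1) → k * (Uc n k l + 1) ≤ (n+1-k) * (Gc n k l + 1)) ∧
      (¬ ty n k (l+1) → (n+1-k) * (Gc n k l + 1) ≤ k * (Uc n k l + 1))) := by
  induction l with
  | zero =>
    have h1 : Uc n k 0 = 0 := by simp [Uc, oeSums]
    have h2 : Gc n k 0 = 0 := by simp [Gc, oeSums]
    rw [h1, h2]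
    refine ⟨by omega, fun _ => ?_⟩
    have hz : ty n k (0+1) ↔ k ≤ n + 1 - k := by
      unfold ty zk
      rw [fk_one, fk_n hkn]
      simp
    rw [hz]
    omega
  | succ l ih =>
    obtain ⟨ih1, ih2⟩ := ih
    by_cases hS : Uc n k l + Gc n k l < n
    · by_cases ht : ty n k (l+1)
      · have h3 := d_u hk1 hkn ht hS
        obtain ⟨h4, h5⟩ := succ_u ht
        have h6 := (ih2 hS).1 ht
        rw [ty_succ n k (l+1), h4, h5]
        refine ⟨by omega, fun hlt => ⟨fun h => absurd ht h, fun _ => ?_⟩⟩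
        have h7 : Uc n k l + 1 ≤ (n+1-k) * (Gc n k l + 1) / k := by
          rw [Nat.le_div_iff_mul_le hk1, mul_comm]; exact h6
        have h8 : Uc n k l + dk n k (l+1) = (n+1-k) * (Gc n k l + 1) / k := by omega
        rw [h8]
        exact (Nat.lt_mul_div_succ _ hk1).le
      · have h3 := d_g hk1 hkn ht hS
        obtain ⟨h4, h5⟩ := succ_g ht
        have h6 := (ih2 hS).2 ht
        rw [ty_succ n k (l+1), h4, h5]
        refine ⟨by omega, fun hlt => ⟨fun _ => ?_, fun h => absurd ht h⟩⟩
        have h7 : Gc n k l + 1 ≤ k * (Uc n k l + 1) / (n+1-k) := by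
          rw [Nat.le_div_iff_mul_le (by omega), mul_comm]; exact h6
        have h8 : Gc n k l + dk n k (l+1) = k * (Uc n k l + 1) / (n+1-k) := by omega
        rw [h8]
        exact (Nat.lt_mul_div_succ _ (by omega)).le
    · have h3 := d_zero hS
      by_cases ht : ty n k (l+1)
      · obtain ⟨h4, h5⟩ := succ_u ht
        rw [h4, h5]
        exact ⟨by omega, fun h => by omega⟩
      · obtain ⟨h4, h5⟩ := succ_g ht
        rw [h4, h5]
        exact ⟨by omega, fun h => by omega⟩

lemma S_succ (n k l : ℕ) : Uc n k (l+1) + Gc n k (l+1) = Uc n k l + Gc n k l + dk n k (l+1) := by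
  rw [← sum_d, ← sum_d, sum_range_succ _ (l+1)]

lemma d_pos (hk1 : 1 ≤ k) (hkn : k ≤ n) (hS : Uc n k l + Gc n k l < n) : 1 ≤ dk n k (l+1) := by
  obtain ⟨h1, h2⟩ := (block_inv hk1 hkn l).2 hS
  by_cases ht : ty n k (l+1)
  · have h3 := d_u hk1 hkn ht hS
    have h7 : Uc n k l + 1 ≤ (n+1-k) * (Gc n k l + 1) / k := by
      rw [Nat.le_div_iff_mul_le hk1, mul_comm]; exact h1 ht
    omega
  · have h3 := d_g hk1 hkn ht hS
    have h7 : Gc n k l + 1 ≤ k * (Uc n k l + 1) / (n+1-k) := by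
      rw [Nat.le_div_iff_mul_le (by omega), mul_comm]; exact h2 ht
    omega

lemma S_mono (n k : ℕ) : Monotone (fun l => Uc n k l + Gc n k l) :=
  monotone_nat_of_le_succ fun l => by have := S_succ n k l; omega

lemma tIdx_eq_s5 {j l : ℕ} (h1 : Uc n k l + Gc n k l < j) (h2 : j ≤ Uc n k (l+1) + Gc n k (l+1)) :
    tIdx (etak n k) j = l + 1 := by
  have e : {t | j ≤ ∑ i ∈ range (t+1), (etak n k).d i} = Set.Ici (l+1) := by
    ext t
    have : ∑ i ∈ range (t+1), (etak n k).d i = Uc n k t + Gc n k t := sum_d n k t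
    simp only [Set.mem_ofPred_eq, Set.mem_Ici, this]
    constructor
    · intro h
      by_contra hc
      have := S_mono n k (show t ≤ l by omega)
      simp only at this
      omega
    · intro h
      have := S_mono n k h
      simp only at this
      omega
  rw [tIdx, e, csInf_Ici]

lemma vvec_eq_s5 {j l : ℕ} (h1 : Uc n k l + Gc n k l < j) (h2 : j ≤ Uc n k (l+1) + Gc n k (l+1)) :
    (ty n k (l+1) → vvec (etak n k) j = (Uc n k l + (j - (Uc n k l + Gc n k l)), 0)) ∧
    (¬ ty n k (l+1) → vvec (etak n k) j = (0, Gc n k l + (j - (Uc n k l + Gc n k l)))) := by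
  have hs : ∑ i ∈ range (l+1), (etak n k).d i = Uc n k l + Gc n k l := sum_d n k l
  have hs2 : (∑ i ∈ range (l+1), if (Odd i ↔ Odd (l+1)) then (etak n k).d i else 0) =
      if ty n k (l+1) then Uc n k l else Gc n k l := same_sum n k l
  have hz : ((etak n k).z = true ↔ Odd (l+1)) ↔ ty n k (l+1) := Iff.rfl
  unfold vvec
  simp only [tIdx_eq_s5 h1 h2, hs, hs2]
  constructor
  · intro ht
    rw [if_pos (hz.2 ht), if_pos ht]
  · intro ht
    rw [if_neg (fun h => ht (hz.1 h)), if_neg ht]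

/-- states -/
def Qs (n k j : ℕ) (p : ℕ × ℕ) : Prop := j < n → ∃ l, Uc n k l + Gc n k l ≤ j ∧
  j < Uc n k (l+1) + Gc n k (l+1) ∧
  (ty n k (l+1) → p = (Uc n k l + (j - (Uc n k l + Gc n k l)), Gc n k l)) ∧
  (¬ ty n k (l+1) → p = (Uc n k l, Gc n k l + (j - (Uc n k l + Gc n k l))))

/-- step relation -/
def Sr (n k j : ℕ) (p p' : ℕ × ℕ) : Prop :=
  (p' = (p.1 + 1, p.2) ∧ k * (p.1 + 1) ≤ (n+1-k) * (p.2 + 1) ∧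
    (j < n → vvec (etak n k) (j+1) = (p.1 + 1, 0))) ∨
  (p' = (p.1, p.2 + 1) ∧ (n+1-k) * (p.2 + 1) ≤ k * (p.1 + 1) ∧
    (j < n → vvec (etak n k) (j+1) = (0, p.2 + 1)))

lemma Q_end (hk1 : 1 ≤ k) (hkn : k ≤ n) (l : ℕ) :
    Qs n k (Uc n k l + Gc n k l) (Uc n k l, Gc n k l) := by
  intro h
  refine ⟨l, le_rfl, ?_, fun _ => by simp, fun _ => by simp⟩
  have := d_pos hk1 hkn h
  have := S_succ n k l
  omega

lemma Q_step (hk1 : 1 ≤ k) (hkn : k ≤ n) (j : ℕ) (p : ℕ × ℕ) (hQ : Qs n k j p) :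
    ∃ p', Qs n k (j+1) p' ∧ Sr n k j p p' := by
  by_cases hj : j < n
  · obtain ⟨l, h1, h2, h3, h4⟩ := hQ hj
    have hS : Uc n k l + Gc n k l < n := by omega
    have hv := vvec_eq_s5 (n := n) (k := k) (j := j+1) (l := l) (by omega) (by omega)
    by_cases ht : ty n k (l+1)
    · have hp := h3 ht
      subst hp
      refine ⟨(Uc n k l + (j - (Uc n k l + Gc n k l)) + 1, Gc n k l), ?_, Or.inl ⟨rfl, ?_, ?_⟩⟩
      · by_cases hlt : j + 1 < Uc n k (l+1) + Gc n k (l+1)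
        · intro _
          refine ⟨l, by omega, hlt, fun _ => ?_, fun h => absurd ht h⟩
          ext <;> simp only; omega
        · have := Q_end hk1 hkn (l+1)
          obtain ⟨g1, g2⟩ := succ_u ht
          convert this using 1
          · omega
          · ext <;> simp only <;> omega
      · simp only
        have h5 := d_u hk1 hkn ht hS
        have h6 := S_succ n k l
        rw [mul_comm k, ← Nat.le_div_iff_mul_le hk1]
        omega
      · intro _
        rw [hv.1 ht]
        ext <;> simp only; omega
    · have hp := h4 ht
      subst hp
      refine ⟨(Uc n k l, Gc n k l + (j - (Uc n k l + Gc n k l)) + 1), ?_, Or.inr ⟨rfl, ?_, ?_⟩⟩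
      · by_cases hlt : j + 1 < Uc n k (l+1) + Gc n k (l+1)
        · intro _
          refine ⟨l, by omega, hlt, fun h => absurd h ht, fun _ => ?_⟩
          ext <;> simp only; omega
        · have := Q_end hk1 hkn (l+1)
          obtain ⟨g1, g2⟩ := succ_g ht
          convert this using 1
          · omega
          · ext <;> simp only <;> omega
      · simp only
        have h5 := d_g hk1 hkn ht hS
        have h6 := S_succ n k l
        rw [mul_comm (n+1-k), ← Nat.le_div_iff_mul_le (show 0 < n+1-k by omega)]
        omega
      · intro _
        rw [hv.2 ht]
        ext <;> simp only; omega
  · rcases le_total (k * (p.1 + 1)) ((n+1-k) * (p.2 + 1)) with h | h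
    · exact ⟨(p.1 + 1, p.2), fun h => by omega, Or.inl ⟨rfl, h, fun h => by omega⟩⟩
    · exact ⟨(p.1, p.2 + 1), fun h => by omega, Or.inr ⟨rfl, h, fun h => by omega⟩⟩

lemma exists_path (hk1 : 1 ≤ k) (hkn : k ≤ n) : ∃ a b s t : ℕ → ℕ, IsPath k (n+1-k) a b s t ∧
    ∀ j < n, vvec (etak n k) (j+1) = (s (j+1), t (j+1)) := by
  have h0 : Qs n k 0 (0, 0) := by
    have := Q_end hk1 hkn 0
    simpa [Uc, Gc, oeSums] using this
  choose f hf1 hf2 using Q_step hk1 hkn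
  let P : (j : ℕ) → {p // Qs n k j p} := fun j =>
    Nat.rec ⟨(0, 0), h0⟩ (fun j p => ⟨f j p.1 p.2, hf1 j p.1 p.2⟩) j
  have hP0 : (P 0).1 = (0, 0) := rfl
  have hP : ∀ j, Sr n k j (P j).1 (P (j+1)).1 := fun j => hf2 j (P j).1 (P j).2
  let a : ℕ → ℕ := fun j => (P j).1.1
  let b : ℕ → ℕ := fun j => (P j).1.2
  let s : ℕ → ℕ := fun j => if a j = a (j-1) then 0 else a j
  let t : ℕ → ℕ := fun j => if a j = a (j-1) then b j else 0
  have key : ∀ j, ((a (j+1) = a j + 1 ∧ b (j+1) = b j ∧ s (j+1) = a j + 1 ∧ t (j+1) = 0 ∧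
      k * (a j + 1) ≤ (n+1-k) * (b j + 1)) ∨
    (a (j+1) = a j ∧ b (j+1) = b j + 1 ∧ s (j+1) = 0 ∧ t (j+1) = b j + 1 ∧
      (n+1-k) * (b j + 1) ≤ k * (a j + 1))) ∧
      (j < n → vvec (etak n k) (j+1) = (s (j+1), t (j+1))) := by
    intro j
    rcases hP j with ⟨h1, h2, h3⟩ | ⟨h1, h2, h3⟩
    · have e1 : a (j+1) = a j + 1 := congrArg Prod.fst h1
      have e2 : b (j+1) = b j := by change (P (j+1)).1.2 = _; rw [h1]
      have e3 : s (j+1) = a j + 1 := by simp [s, e1]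
      have e4 : t (j+1) = 0 := by simp [t, e1]
      exact ⟨Or.inl ⟨e1, e2, e3, e4, h2⟩, fun hj => by rw [h3 hj, e3, e4]⟩
    · have e1 : a (j+1) = a j := by change (P (j+1)).1.1 = _; rw [h1]
      have e2 : b (j+1) = b j + 1 := congrArg Prod.snd h1
      have e3 : s (j+1) = 0 := by simp [s, e1]
      have e4 : t (j+1) = b j + 1 := by simp [t, e1, e2]
      exact ⟨Or.inr ⟨e1, e2, e3, e4, h2⟩, fun hj => by rw [h3 hj, e3, e4]⟩
  exact ⟨a, b, s, t, ⟨rfl, rfl, by simp [s, a, hP0], by simp [t, b, hP0], fun j => (key j).1⟩,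
    fun j => (key j).2⟩

lemma fk_add (k : ℕ) (v w : ℕ × ℕ) : fk k (v + w) = fk k v + fk k w := by
  simp [fk]; ring

lemma fk_mJ (n k : ℕ) (J : Finset (ℕ × ℕ × ℕ)) : fk k (mJ n J) = ∑ β ∈ J, fk k (Amap n β) := by
  classical
  unfold mJ
  induction J using Finset.induction_on with
  | empty => simp [fk]
  | insert x J hx ih => rw [sum_insert hx, sum_insert hx, fk_add, ih]

lemma fk_Amap (hkn : k ≤ n) (β : ℕ × ℕ × ℕ) :
    fk k (Amap n β) = ((k * β.1 + β.2.1 + (n+1-k) * β.2.2 : ℕ) : ℤ) := by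
  rw [fk, Amap]; push_cast [Nat.cast_sub (show k ≤ n + 1 by omega)]; ring

lemma Amap_inj {β γ : ℕ × ℕ × ℕ} (hb : β ∈ Lam3 n) (hg : γ ∈ Lam3 n)
    (h : Amap n β = Amap n γ) : β = γ := by
  obtain ⟨b1, b2, b3⟩ := β
  obtain ⟨c1, c2, c3⟩ := γ
  simp only [Lam3, mem_filter] at hb hg
  simp only [Amap, Prod.mk.injEq] at h
  obtain ⟨h1, h2⟩ := h
  have e : b3 = c3 := by
    rcases lt_trichotomy b3 c3 with hl | hl | hl
    · have : (n+1) * (b3 + 1) ≤ (n+1) * c3 := Nat.mul_le_mul_left _ hl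
      rw [mul_add] at this
      omega
    · exact hl
    · have : (n+1) * (c3 + 1) ≤ (n+1) * b3 := Nat.mul_le_mul_left _ hl
      rw [mul_add] at this
      omega
  subst e
  have e2 : b2 = c2 := by omega
  have e1 : b1 = c1 := by omega
  rw [e1, e2]

lemma upper {a b s t : ℕ → ℕ} (hkn : k ≤ n)
    (h : IsPath k (n+1-k) a b s t)
    (hv : ∀ j < n, vvec (etak n k) (j+1) = (s (j+1), t (j+1))) :
    fk k (mJ n (Jset n (etak n k))) ≤
      ((∑ α ∈ Lam2 n, (α.2 + IsPath.om k (n+1-k) s t α.1) : ℕ) : ℤ) := by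
  classical
  let F : ℕ × ℕ → ℕ × ℕ := fun α => Amap n (s α.1, α.2, t α.1)
  have hF : ∀ α, fk k (F α) = ((α.2 + IsPath.om k (n+1-k) s t α.1 : ℕ) : ℤ) := by
    intro α
    simp only [F]
    rw [fk_Amap hkn, IsPath.om]
    push_cast; ring
  have hT : Tset' n (etak n k) ⊆ (Lam2 n).image F := by
    intro v hvT
    simp only [Tset', mem_union, mem_biUnion, mem_Icc, mem_image] at hvT
    rw [mem_image]
    rcases hvT with hvT | ⟨i, hi, v0, hv0, rfl⟩
    · simp only [Tj, if_pos, mem_image, mem_range] at hvT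
      obtain ⟨q, hq, rfl⟩ := hvT
      refine ⟨(0, q+1), ?_, ?_⟩
      · simp only [Lam2, mem_filter, mem_product, mem_range]; omega
      · simp [F, Amap, h.s0, h.t0]
    · obtain ⟨j, rfl⟩ : ∃ j, i = j + 1 := ⟨i - 1, by omega⟩
      rw [Tj, if_neg (by omega)] at hv0
      simp only [mem_image, mem_range] at hv0
      obtain ⟨p, hp, rfl⟩ := hv0
      refine ⟨(j+1, p), ?_, ?_⟩
      · simp only [Lam2, mem_filter, mem_product, mem_range]; omega
      · simp only [rshift, hv j (by omega), F, Amap, Prod.mk_add_mk, Prod.mk.injEq]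
        constructor
        · trivial
        · ring
  rw [fk_mJ, ← sum_image (f := fun v => fk k v) (g := Amap n) (s := Jset n (etak n k))]
  · calc ∑ v ∈ (Jset n (etak n k)).image (Amap n), fk k v
        ≤ ∑ v ∈ (Lam2 n).image F, fk k v := by
          apply sum_le_sum_of_subset_of_nonneg
          · intro v hv'
            obtain ⟨β, hβ, rfl⟩ := mem_image.1 hv'
            exact hT (mem_filter.1 hβ).2
          · intro v hv' _
            obtain ⟨α, _, rfl⟩ := mem_image.1 hv'
            rw [hF]; positivity
      _ ≤ ∑ α ∈ Lam2 n, fk k (F α) := by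
          apply sum_image_le_of_nonneg
          intro v hv'
          obtain ⟨α, _, rfl⟩ := mem_image.1 hv'
          rw [hF]; positivity
      _ = _ := by
          rw [Nat.cast_sum]
          exact sum_congr rfl fun α _ => hF α
  · intro x hx y hy hxy
    exact Amap_inj (mem_filter.1 hx).1 (mem_filter.1 hy).1 hxy

end eta

theorem stmt5 (n : ℕ) (hn : 1 ≤ n) (k : ℕ) (hk1 : 1 ≤ k) (hkn : k ≤ n) :
    ∀ J : Finset (ℕ × ℕ × ℕ), memSA n J →
      fk k (mJ n (Jset n (etak n k))) ≤ fk k (mJ n J) := by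
  intro J hJ
  obtain ⟨a, b, s, t, h, hv⟩ := exists_path hk1 hkn
  refine (upper hkn h hv).trans ?_
  have := lower_bound h hk1 (show 1 ≤ n + 1 - k by omega) (by omega) J hJ
  rw [fk_mJ, sum_congr rfl (fun β _ => fk_Amap hkn β), ← Nat.cast_sum]
  exact_mod_cast this
end
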